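/- Let r > r₀ > 0, 0 < k < d, and let P ⊂ ℝ^d be finite with circumradius r₀. Then V_k(conv_r P) ≥ (C(d,k)·ω_d^{1−k/d}/ω_{d−k})·(Vol_d(S_{r,r₀,d}))^{k/d}, where ω_m is the volume of the m-dimensional unit ball. -/

import Mathlib

open Metric Set MeasureTheory Pointwise RealInnerProductSpace

variable {d : ℕ}

/-- The `r`-ball body generated by `X`: the intersection of all closed balls of
radius `r` centered at points of `X`. -/
def ballBody (r : ℝ) (X : Set (EuclideanSpace ℝ (Fin d))) :
    Set (EuclideanSpace ℝ (Fin d)) :=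
  ⋂ x ∈ X, closedBall x r

/-- The `r`-ball convex hull of `X`: the intersection of all closed balls of
radius `r` containing `X`. -/
def ballHull (r : ℝ) (X : Set (EuclideanSpace ℝ (Fin d))) :
    Set (EuclideanSpace ℝ (Fin d)) :=
  ⋂ y ∈ {y : EuclideanSpace ℝ (Fin d) | X ⊆ closedBall y r}, closedBall y r

/-- Volume of the m-dimensional unit ball. -/
noncomputable def unitBallVol (m : ℕ) : ℝ :=
  (volume (closedBall (0 : EuclideanSpace ℝ (Fin m)) 1)).toReal

/-- `V` is a system of intrinsic volumes on `ℝ^d`, i.e. it satisfies the Steiner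
formula for all convex bodies. -/
def IsIntrinsicVolumes (d : ℕ)
    (V : ℕ → Set (EuclideanSpace ℝ (Fin d)) → ℝ) : Prop :=
  ∀ A : Set (EuclideanSpace ℝ (Fin d)), Convex ℝ A → IsCompact A → A.Nonempty →
    (∀ ε : ℝ, 0 < ε →
      (volume (A + ε • closedBall (0 : EuclideanSpace ℝ (Fin d)) 1)).toReal =
        ∑ i ∈ Finset.range (d + 1), unitBallVol (d - i) * V i A * ε ^ (d - i)) ∧
    V 0 A = 1

/-!
By the Steiner formula, `∑ i, ω_{d-i} V_i(K) ε^{d-i}` is the volume of `K + ε B`. Expanding the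
volume of `K + Z` for zonotopes `Z` approximating `ε B` shows that Steiner symmetrization lowers
every `V_k` while preserving the volume. Among the bodies in a fixed ball with the volume of `K` and
with no `V_k` larger than that of `K`, one with maximal overlap with the centered ball of that
volume must be that ball, since otherwise a symmetrization increases the overlap. This is the
extended isoperimetric inequality `(V_d(K)/ω_d)^{1/d} ≤ (V_k(K)/V_k(B))^{1/k}`.

It remains to see that the spindle has the smallest volume among the `r`-ball hulls of sets of
circumradius `r₀`. The center of the minimal ball is a convex combination of finitely many contact
points. Every contact point `p` spans with its antipode a spindle, and the part of this spindle
lying in the outer normal cone of `p` is contained in the hull. In a cone around its axis a spindle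
is relatively at least as dense as a ball, by Chebyshev's integral inequality applied to the slopes
over the axis, and the normal cones of the contact points cover the space.
-/

section LineFibers

variable {E : Type*} [NormedAddCommGroup E] [InnerProductSpace ℝ E] {v : E}

/-- The fiber of `X` over the point `w` of the hyperplane orthogonal to `v`, as a set of
coordinates on the line through `w` in direction `v`. -/
def lineFiber (v : E) (X : Set E) (w : (ℝ ∙ v)ᗮ) : Set ℝ := {t | t • v + (w : E) ∈ X}

/-- The set of points of the hyperplane orthogonal to `v` over which `X` has a nonempty fiber,
i.e. the shadow of `X` in direction `v`. -/
def lineShadow (v : E) (X : Set E) : Set (ℝ ∙ v)ᗮ := {w | (lineFiber v X w).Nonempty}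

lemma exists_eq_smul_add_orthogonal (v x : E) :
    ∃ (t : ℝ) (w : (ℝ ∙ v)ᗮ), x = t • v + (w : E) := by
  obtain ⟨y, hy, z, hz, rfl⟩ := (ℝ ∙ v).exists_add_mem_mem_orthogonal x
  obtain ⟨t, rfl⟩ := Submodule.mem_span_singleton.1 hy
  exact ⟨t, ⟨z, hz⟩, rfl⟩

lemma orthogonalProjectionOnto_smul_add (t : ℝ) (w : (ℝ ∙ v)ᗮ) :
    (ℝ ∙ v)ᗮ.orthogonalProjectionOnto (t • v + (w : E)) = w := by
  rw [map_add, map_smul, Submodule.orthogonalProjectionOnto_mem_subspace_eq_self,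
    Submodule.orthogonalProjectionOnto_orthogonalComplement_singleton_eq_zero, smul_zero, zero_add]

lemma inner_smul_add_orthogonal (hv : ‖v‖ = 1) (t : ℝ) (w : (ℝ ∙ v)ᗮ) :
    ⟪v, t • v + (w : E)⟫ = t := by
  rw [inner_add_right, inner_smul_right, real_inner_self_eq_norm_sq, hv,
    Submodule.mem_orthogonal_singleton_iff_inner_right.1 w.2]
  ring

lemma smul_add_orthogonal_inj (hv : ‖v‖ = 1) {s t : ℝ} {w w' : (ℝ ∙ v)ᗮ} :
    s • v + (w : E) = t • v + (w' : E) ↔ s = t ∧ w = w' := by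
  refine ⟨fun h => ⟨?_, ?_⟩, by rintro ⟨rfl, rfl⟩; rfl⟩
  · simpa only [inner_smul_add_orthogonal hv] using congrArg (fun z => ⟪v, z⟫) h
  · simpa only [orthogonalProjectionOnto_smul_add] using
      congrArg (ℝ ∙ v)ᗮ.orthogonalProjectionOnto h

lemma norm_sq_smul_add_orthogonal (hv : ‖v‖ = 1) (t : ℝ) (w : (ℝ ∙ v)ᗮ) :
    ‖t • v + (w : E)‖ ^ 2 = t ^ 2 + ‖w‖ ^ 2 := by
  rw [norm_add_sq_real, norm_smul, hv, inner_smul_left,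
    Submodule.mem_orthogonal_singleton_iff_inner_right.1 w.2]
  simp

lemma lineShadow_eq_image (v : E) (X : Set E) :
    lineShadow v X = (ℝ ∙ v)ᗮ.orthogonalProjectionOnto '' X := by
  ext w
  constructor
  · rintro ⟨t, ht⟩
    exact ⟨_, ht, orthogonalProjectionOnto_smul_add t w⟩
  · rintro ⟨x, hx, rfl⟩
    obtain ⟨t, w, rfl⟩ := exists_eq_smul_add_orthogonal v x
    rw [orthogonalProjectionOnto_smul_add]
    exact ⟨t, hx⟩

lemma isCompact_lineShadow {X : Set E} (hX : IsCompact X) : IsCompact (lineShadow v X) := by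
  rw [lineShadow_eq_image]
  exact hX.image (by fun_prop)

lemma isCompact_lineFiber (hv : ‖v‖ = 1) {X : Set E} (hX : IsCompact X) (w : (ℝ ∙ v)ᗮ) :
    IsCompact (lineFiber v X w) := by
  have hcont : Continuous fun t : ℝ => t • v + (w : E) := by fun_prop
  refine (hX.image (f := fun x => ⟪v, x⟫) (by fun_prop)).of_isClosed_subset
    (hX.isClosed.preimage hcont) fun t ht => ⟨_, ht, inner_smul_add_orthogonal hv t w⟩

lemma convex_lineFiber {X : Set E} (hX : Convex ℝ X) (w : (ℝ ∙ v)ᗮ) :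
    Convex ℝ (lineFiber v X w) :=
  (hX.translate_preimage_left (w : E)).is_linear_preimage
    (LinearMap.toSpanSingleton ℝ E v).isLinear

lemma lineFiber_eq_empty_or_eq_Icc (hv : ‖v‖ = 1) {X : Set E} (hX : IsCompact X)
    (hXc : Convex ℝ X) (w : (ℝ ∙ v)ᗮ) :
    lineFiber v X w = ∅ ∨ ∃ a b, a ≤ b ∧ lineFiber v X w = Icc a b := by
  rcases (lineFiber v X w).eq_empty_or_nonempty with h | h
  · exact Or.inl h
  · have hcomp := isCompact_lineFiber hv hX w
    exact Or.inr ⟨_, _, csInf_le_csSup h hcomp.bddBelow hcomp.bddAbove,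
      eq_Icc_of_connected_compact ⟨h, (convex_lineFiber hXc w).isPreconnected⟩ hcomp⟩

variable [FiniteDimensional ℝ E] [MeasurableSpace E] [BorelSpace E]

lemma measurePreserving_smul_add_orthogonal (hv : ‖v‖ = 1) :
    MeasurePreserving fun q : ℝ × (ℝ ∙ v)ᗮ => q.1 • v + (q.2 : E) := by
  have h := (ℝ ∙ v).orthogonalDecomposition.symm.measurePreserving.comp
    ((WithLp.volume_preserving_toLp (ℝ ∙ v) (ℝ ∙ v)ᗮ).comp
      ((LinearIsometryEquiv.toSpanUnitSingleton (𝕜 := ℝ) v hv).measurePreserving.prod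
        (MeasurePreserving.id volume)))
  convert h using 1
  · ext q
    simp
  · rfl

lemma measurable_volume_lineFiber {X : Set E} (hX : MeasurableSet X) :
    Measurable fun w : (ℝ ∙ v)ᗮ => volume (lineFiber v X w) :=
  measurable_measure_prodMk_right
    ((by fun_prop : Measurable fun q : ℝ × (ℝ ∙ v)ᗮ => q.1 • v + (q.2 : E)) hX)

lemma volume_eq_lintegral_lineFiber (hv : ‖v‖ = 1) {X : Set E} (hX : MeasurableSet X) :
    volume X = ∫⁻ w : (ℝ ∙ v)ᗮ, volume (lineFiber v X w) := by
  have h := measurePreserving_smul_add_orthogonal hv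
  rw [← h.measure_preimage hX.nullMeasurableSet, Measure.volume_eq_prod,
    Measure.prod_apply_symm (h.measurable hX)]
  rfl

end LineFibers

section Segments

variable {E : Type*} [NormedAddCommGroup E] [InnerProductSpace ℝ E]

/-- The symmetric segment `[-t u, t u]`. -/
def symSegment (u : E) (t : ℝ) : Set E := (fun a : ℝ => a • u) '' Icc (-t) t

lemma isCompact_symSegment (u : E) (t : ℝ) : IsCompact (symSegment u t) :=
  isCompact_Icc.image (by fun_prop)

lemma symSegment_smul (u : E) {c t : ℝ} (hc : 0 ≤ c) (ht : 0 ≤ t) :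
    symSegment (c • u) t = symSegment u (t * c) := by
  rw [symSegment, symSegment, ← neg_mul, ← image_mul_right_Icc (by linarith) hc, image_image]
  simp only [mul_smul]

lemma lineFiber_add_symSegment (v : E) (A : Set E) (t : ℝ) (w : (ℝ ∙ v)ᗮ) :
    lineFiber v (A + symSegment v t) w = lineFiber v A w + Icc (-t) t := by
  ext s
  constructor
  · rintro ⟨x, hx, _, ⟨c, hc, rfl⟩, hxc⟩
    have hs : (s - c) • v + (w : E) = x := by
      rw [sub_smul, sub_add_eq_add_sub, ← hxc]
      exact add_sub_cancel_right _ _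
    exact ⟨s - c, by rwa [lineFiber, mem_ofPred_eq, hs], c, hc, sub_add_cancel s c⟩
  · rintro ⟨a, ha, c, hc, rfl⟩
    exact ⟨_, ha, _, ⟨c, hc, rfl⟩, by module⟩

variable [FiniteDimensional ℝ E] [MeasurableSpace E] [BorelSpace E]

lemma volume_add_symSegment {v : E} (hv : ‖v‖ = 1) {A : Set E} (hA : IsCompact A)
    (hAc : Convex ℝ A) {t : ℝ} (ht : 0 ≤ t) :
    volume (A + symSegment v t) =
      volume A + ENNReal.ofReal (2 * t) * volume (lineShadow v A) := by
  rw [volume_eq_lintegral_lineFiber hv (hA.add (isCompact_symSegment v t)).measurableSet,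
    volume_eq_lintegral_lineFiber hv hA.measurableSet,
    ← lintegral_indicator_const (isCompact_lineShadow hA).measurableSet,
    ← lintegral_add_left (measurable_volume_lineFiber hA.measurableSet)]
  refine lintegral_congr fun w => ?_
  rw [lineFiber_add_symSegment]
  rcases lineFiber_eq_empty_or_eq_Icc hv hA hAc w with h | ⟨a, b, hab, h⟩
  · rw [h, indicator_of_notMem (by simp [lineShadow, h])]
    simp
  · rw [indicator_of_mem (by simp [lineShadow, h, hab]), h, Icc_add_Icc hab (by linarith),
      Real.volume_Icc, Real.volume_Icc, ← ENNReal.ofReal_add (by linarith) (by linarith)]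
    congr 1
    ring

lemma exists_volume_add_symSegment_eq (u : E) {A : Set E} (hA : IsCompact A) (hAc : Convex ℝ A) :
    ∃ c : ℝ, ∀ t : ℝ, 0 ≤ t →
      volume.real (A + symSegment u t) = volume.real A + t * c := by
  rcases eq_or_ne u 0 with rfl | hu
  · refine ⟨0, fun t ht => ?_⟩
    have hzero : symSegment (0 : E) t = {0} := by
      simp only [symSegment, smul_zero]
      exact (nonempty_Icc.2 (by linarith)).image_const 0
    simp [hzero]
  · set v : E := ‖u‖⁻¹ • u with hv
    have hv1 : ‖v‖ = 1 := norm_smul_inv_norm (𝕜 := ℝ) hu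
    have huv : ‖u‖ • v = u := by rw [hv, smul_inv_smul₀ (norm_ne_zero_iff.2 hu)]
    refine ⟨2 * ‖u‖ * volume.real (lineShadow v A), fun t ht => ?_⟩
    have htu : 0 ≤ t * ‖u‖ := by positivity
    rw [← huv, symSegment_smul v (norm_nonneg u) ht, huv, measureReal_def,
      volume_add_symSegment hv1 hA hAc htu, ENNReal.toReal_add hA.measure_lt_top.ne
      (ENNReal.mul_ne_top ENNReal.ofReal_ne_top (isCompact_lineShadow hA).measure_lt_top.ne),
      ENNReal.toReal_mul, ENNReal.toReal_ofReal (by positivity), ← measureReal_def,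
      ← measureReal_def]
    ring

end Segments

section SteinerSymmetrization

variable {E : Type*} [NormedAddCommGroup E] [InnerProductSpace ℝ E] {v : E} {K : Set E}

/-- The Steiner symmetral of a convex set `K` in direction `v`: each fiber of `K` along `v` is
replaced by half of its difference set, which for an interval is the centered interval of the
same length. -/
def steinerSymm (v : E) (K : Set E) : Set E :=
  {z | ∃ (a b : ℝ) (w : (ℝ ∙ v)ᗮ), a • v + (w : E) ∈ K ∧ b • v + (w : E) ∈ K ∧
    z = ((a - b) / 2) • v + (w : E)}

lemma reflection_orthogonal_smul_add (t : ℝ) (w : (ℝ ∙ v)ᗮ) :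
    (ℝ ∙ v)ᗮ.reflection (t • v + (w : E)) = (-t) • v + (w : E) := by
  rw [map_add, map_smul, Submodule.reflection_orthogonalComplement_singleton_eq_neg,
    Submodule.reflection_mem_subspace_eq_self w.2, smul_neg, neg_smul]

lemma lineFiber_steinerSymm (hv : ‖v‖ = 1) (w : (ℝ ∙ v)ᗮ) :
    lineFiber v (steinerSymm v K) w =
      {s | ∃ a ∈ lineFiber v K w, ∃ b ∈ lineFiber v K w, s = (a - b) / 2} := by
  ext s
  constructor
  · rintro ⟨a, b, w', ha, hb, h⟩
    obtain ⟨rfl, rfl⟩ := (smul_add_orthogonal_inj hv).1 h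
    exact ⟨a, ha, b, hb, rfl⟩
  · rintro ⟨a, ha, b, hb, rfl⟩
    exact ⟨a, b, w, ha, hb, rfl⟩

lemma lineFiber_steinerSymm_of_eq_empty (hv : ‖v‖ = 1) {w : (ℝ ∙ v)ᗮ}
    (h : lineFiber v K w = ∅) : lineFiber v (steinerSymm v K) w = ∅ := by
  simp [lineFiber_steinerSymm hv, h]

lemma lineFiber_steinerSymm_of_eq_Icc (hv : ‖v‖ = 1) {w : (ℝ ∙ v)ᗮ} {a b : ℝ}
    (h : lineFiber v K w = Icc a b) :
    lineFiber v (steinerSymm v K) w = Icc (-((b - a) / 2)) ((b - a) / 2) := by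
  rw [lineFiber_steinerSymm hv, h]
  ext s
  constructor
  · rintro ⟨x, hx, y, hy, rfl⟩
    constructor <;> linarith [hx.1, hx.2, hy.1, hy.2]
  · rintro ⟨h₁, h₂⟩
    exact ⟨(a + b) / 2 + s, ⟨by linarith, by linarith⟩, (a + b) / 2 - s,
      ⟨by linarith, by linarith⟩, by ring⟩

lemma convex_steinerSymm (v : E) (hK : Convex ℝ K) : Convex ℝ (steinerSymm v K) := by
  rintro x ⟨a, b, w, ha, hb, rfl⟩ y ⟨a', b', w', ha', hb', rfl⟩ s t hs ht hst
  refine ⟨s * a + t * a', s * b + t * b', s • w + t • w', ?_, ?_, ?_⟩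
  · convert hK ha ha' hs ht hst using 1
    push_cast
    module
  · convert hK hb hb' hs ht hst using 1
    push_cast
    module
  · push_cast
    module

lemma steinerSymm_eq_image (v : E) (K : Set E) :
    steinerSymm v K = (fun q : E × E => (1 / 2 : ℝ) • (q.1 + (ℝ ∙ v)ᗮ.reflection q.2)) ''
      (K ×ˢ K ∩ {q | (ℝ ∙ v)ᗮ.orthogonalProjectionOnto q.1 =
        (ℝ ∙ v)ᗮ.orthogonalProjectionOnto q.2}) := by
  ext z
  constructor
  · rintro ⟨a, b, w, ha, hb, rfl⟩
    refine ⟨(a • v + (w : E), b • v + (w : E)), ⟨⟨ha, hb⟩, ?_⟩, ?_⟩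
    · simp only [mem_ofPred_eq, orthogonalProjectionOnto_smul_add]
    · simp only [reflection_orthogonal_smul_add]
      module
  · rintro ⟨⟨x, y⟩, ⟨⟨hx, hy⟩, hxy⟩, rfl⟩
    obtain ⟨a, w, rfl⟩ := exists_eq_smul_add_orthogonal v x
    obtain ⟨b, w', rfl⟩ := exists_eq_smul_add_orthogonal v y
    obtain rfl : w = w' := by
      simpa only [mem_ofPred_eq, orthogonalProjectionOnto_smul_add] using hxy
    refine ⟨a, b, w, hx, hy, ?_⟩
    simp only [reflection_orthogonal_smul_add]
    module

lemma isCompact_steinerSymm (v : E) (hK : IsCompact K) : IsCompact (steinerSymm v K) := by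
  have hpairs : IsCompact (K ×ˢ K ∩ {q : E × E | (ℝ ∙ v)ᗮ.orthogonalProjectionOnto q.1 =
      (ℝ ∙ v)ᗮ.orthogonalProjectionOnto q.2}) :=
    (hK.prod hK).inter_right (isClosed_eq (by fun_prop) (by fun_prop))
  rw [steinerSymm_eq_image]
  exact hpairs.image (by fun_prop)

lemma steinerSymm_nonempty (v : E) (hK : K.Nonempty) : (steinerSymm v K).Nonempty := by
  obtain ⟨x, hx⟩ := hK
  obtain ⟨a, w, rfl⟩ := exists_eq_smul_add_orthogonal v x
  exact ⟨_, a, a, w, hx, hx, rfl⟩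

lemma exists_lineFiber_add_average (hv : ‖v‖ = 1) {Z : Set E} {w : (ℝ ∙ v)ᗮ} {s : ℝ}
    (hs : s ∈ lineFiber v (steinerSymm v K + Z) w) :
    ∃ s₁ ∈ lineFiber v (K + Z) w, ∃ s₂ ∈ lineFiber v ((ℝ ∙ v)ᗮ.reflection '' K + Z) w,
      s = (s₁ + s₂) / 2 := by
  obtain ⟨_, ⟨a, b, w₁, ha, hb, rfl⟩, z, hz, hsz⟩ := hs
  obtain ⟨c, w₂, rfl⟩ := exists_eq_smul_add_orthogonal v z
  have hsum : s • v + (w : E) = ((a - b) / 2 + c) • v + ((w₁ + w₂ : (ℝ ∙ v)ᗮ) : E) := by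
    rw [← hsz]
    push_cast
    module
  obtain ⟨rfl, rfl⟩ := (smul_add_orthogonal_inj hv).1 hsum
  refine ⟨a + c, ⟨_, ha, _, hz, ?_⟩,
    -b + c, ⟨_, ⟨_, hb, reflection_orthogonal_smul_add b w₁⟩, _, hz, ?_⟩, by ring⟩
  · push_cast
    module
  · push_cast
    module

lemma volume_Icc_average_le {I J : Set ℝ} (hI : Convex ℝ I) (hJ : Convex ℝ J)
    {a₁ b₁ a₂ b₂ : ℝ} (ha₁ : a₁ ∈ I) (hb₁ : b₁ ∈ I) (ha₂ : a₂ ∈ J) (hb₂ : b₂ ∈ J) :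
    2 * volume (Icc ((a₁ + a₂) / 2) ((b₁ + b₂) / 2)) ≤ volume I + volume J := by
  have hsubI : Icc a₁ b₁ ⊆ I := hI.ordConnected.out ha₁ hb₁
  have hsubJ : Icc a₂ b₂ ⊆ J := hJ.ordConnected.out ha₂ hb₂
  calc 2 * volume (Icc ((a₁ + a₂) / 2) ((b₁ + b₂) / 2))
      = ENNReal.ofReal ((b₁ - a₁) + (b₂ - a₂)) := by
        rw [Real.volume_Icc, ← ENNReal.ofReal_ofNat, ← ENNReal.ofReal_mul (by norm_num)]
        congr 1
        ring
    _ ≤ volume (Icc a₁ b₁) + volume (Icc a₂ b₂) := by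
        rw [Real.volume_Icc, Real.volume_Icc]
        exact ENNReal.ofReal_add_le
    _ ≤ volume I + volume J := add_le_add (measure_mono hsubI) (measure_mono hsubJ)

variable [FiniteDimensional ℝ E] [MeasurableSpace E] [BorelSpace E]

lemma volume_steinerSymm (hv : ‖v‖ = 1) (hK : IsCompact K) (hKc : Convex ℝ K) :
    volume (steinerSymm v K) = volume K := by
  rw [volume_eq_lintegral_lineFiber hv (isCompact_steinerSymm v hK).measurableSet,
    volume_eq_lintegral_lineFiber hv hK.measurableSet]
  refine lintegral_congr fun w => ?_
  rcases lineFiber_eq_empty_or_eq_Icc hv hK hKc w with h | ⟨a, b, -, h⟩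
  · rw [lineFiber_steinerSymm_of_eq_empty hv h, h]
  · rw [lineFiber_steinerSymm_of_eq_Icc hv h, h, Real.volume_Icc, Real.volume_Icc]
    congr 1
    ring

lemma two_mul_volume_steinerSymm_add_le (hv : ‖v‖ = 1) {Z : Set E} (hK : IsCompact K)
    (hKc : Convex ℝ K) (hZ : IsCompact Z) (hZc : Convex ℝ Z) :
    2 * volume (steinerSymm v K + Z) ≤
      volume (K + Z) + volume ((ℝ ∙ v)ᗮ.reflection '' K + Z) := by
  have hRc : Convex ℝ ((ℝ ∙ v)ᗮ.reflection '' K) :=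
    hKc.linear_image (ℝ ∙ v)ᗮ.reflection.toLinearEquiv.toLinearMap
  have hSZ := (isCompact_steinerSymm v hK).add hZ
  have hmeas := (hK.add hZ).measurableSet
  have hmeasR := ((hK.image (ℝ ∙ v)ᗮ.reflection.continuous).add hZ).measurableSet
  rw [volume_eq_lintegral_lineFiber hv hSZ.measurableSet,
    volume_eq_lintegral_lineFiber hv hmeas, volume_eq_lintegral_lineFiber hv hmeasR,
    ← lintegral_const_mul _ (measurable_volume_lineFiber hSZ.measurableSet),
    ← lintegral_add_left (measurable_volume_lineFiber hmeas)]
  refine lintegral_mono fun w => ?_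
  rcases lineFiber_eq_empty_or_eq_Icc hv hSZ ((convex_steinerSymm v hKc).add hZc) w with
    h | ⟨a, b, hab, h⟩
  · simp [h]
  · obtain ⟨a₁, ha₁, a₂, ha₂, rfl⟩ :=
      exists_lineFiber_add_average hv (h ▸ left_mem_Icc.2 hab : a ∈ _)
    obtain ⟨b₁, hb₁, b₂, hb₂, rfl⟩ :=
      exists_lineFiber_add_average hv (h ▸ right_mem_Icc.2 hab : b ∈ _)
    rw [h]
    exact volume_Icc_average_le (convex_lineFiber (hKc.add hZc) w)
      (convex_lineFiber (hRc.add hZc) w) ha₁ hb₁ ha₂ hb₂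

end SteinerSymmetrization

section IntersectionWithBall

lemma volume_Icc_inter_symm_le (a b j : ℝ) :
    volume (Icc a b ∩ Icc (-j) j) ≤
      volume (Icc (-((b - a) / 2)) ((b - a) / 2) ∩ Icc (-j) j) := by
  rw [Icc_inter_Icc, Icc_inter_Icc, Real.volume_Icc, Real.volume_Icc]
  apply ENNReal.ofReal_le_ofReal
  grind

lemma volume_Icc_inter_symm_lt {a b j s t : ℝ} (hs : s ∈ Ioo a b) (hsj : s ∉ Icc (-j) j)
    (ht : t ∈ Ioo (-j) j) (htab : t ∉ Icc a b) :
    volume (Icc a b ∩ Icc (-j) j) <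
      volume (Icc (-((b - a) / 2)) ((b - a) / 2) ∩ Icc (-j) j) := by
  rw [Icc_inter_Icc, Icc_inter_Icc, Real.volume_Icc, Real.volume_Icc]
  simp only [mem_Ioo, mem_Icc] at hs hsj ht htab
  have hpos : 0 < min ((b - a) / 2) j - max (-((b - a) / 2)) (-j) := by grind
  refine (ENNReal.ofReal_lt_ofReal_iff hpos).2 ?_
  grind

variable {E : Type*} [NormedAddCommGroup E] [InnerProductSpace ℝ E] {v : E} {L : Set E} {ρ : ℝ}

lemma isOpen_setOf_smul_add_orthogonal_mem {U : Set E} (hU : IsOpen U) (t : ℝ) :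
    IsOpen {w : (ℝ ∙ v)ᗮ | t • v + (w : E) ∈ U} :=
  hU.preimage (by fun_prop)

lemma lineFiber_interior_subset (v : E) (X : Set E) (w : (ℝ ∙ v)ᗮ) :
    lineFiber v (interior X) w ⊆ interior (lineFiber v X w) :=
  interior_maximal (fun _ ht => (interior_subset ht : _ ∈ X))
    (isOpen_interior.preimage (by fun_prop))

lemma exists_common_line {x y : E} (hxy : x ≠ y) :
    ∃ v : E, ‖v‖ = 1 ∧ ∃ (s t : ℝ) (w : (ℝ ∙ v)ᗮ),
      x = s • v + (w : E) ∧ y = t • v + (w : E) := by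
  have hsub : x - y ≠ 0 := sub_ne_zero.2 hxy
  refine ⟨‖x - y‖⁻¹ • (x - y), norm_smul_inv_norm (𝕜 := ℝ) hsub, ?_⟩
  obtain ⟨t, w, hy⟩ := exists_eq_smul_add_orthogonal (‖x - y‖⁻¹ • (x - y)) y
  refine ⟨t + ‖x - y‖, t, w, ?_, hy⟩
  rw [add_smul, smul_inv_smul₀ (norm_ne_zero_iff.2 hsub), add_right_comm, ← hy,
    add_sub_cancel]

lemma neg_mem_lineFiber_closedBall (hv : ‖v‖ = 1) {w : (ℝ ∙ v)ᗮ} {t : ℝ}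
    (ht : t ∈ lineFiber v (closedBall 0 ρ) w) : -t ∈ lineFiber v (closedBall 0 ρ) w := by
  have hnorm : ‖(-t) • v + (w : E)‖ = ‖t • v + (w : E)‖ := by
    rw [← sq_eq_sq₀ (norm_nonneg _) (norm_nonneg _), norm_sq_smul_add_orthogonal hv,
      norm_sq_smul_add_orthogonal hv, neg_sq]
  simpa only [lineFiber, mem_ofPred_eq, mem_closedBall_zero_iff, hnorm] using ht

lemma steinerSymm_subset_closedBall (v : E) (hL : L ⊆ closedBall 0 ρ) :
    steinerSymm v L ⊆ closedBall 0 ρ := by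
  rw [steinerSymm_eq_image]
  rintro _ ⟨⟨x, y⟩, ⟨⟨hx, hy⟩, -⟩, rfl⟩
  have hxρ := mem_closedBall_zero_iff.1 (hL hx)
  have hyρ := mem_closedBall_zero_iff.1 (hL hy)
  rw [mem_closedBall_zero_iff, norm_smul, Real.norm_of_nonneg (by norm_num)]
  have hsum := norm_add_le x ((ℝ ∙ v)ᗮ.reflection y)
  rw [LinearIsometryEquiv.norm_map] at hsum
  dsimp only at hxρ hyρ ⊢
  linarith

variable [FiniteDimensional ℝ E]

lemma lineFiber_closedBall_eq_empty_or_eq_Icc (hv : ‖v‖ = 1) (ρ : ℝ) (w : (ℝ ∙ v)ᗮ) :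
    lineFiber v (closedBall 0 ρ) w = ∅ ∨
      ∃ j, lineFiber v (closedBall 0 ρ) w = Icc (-j) j := by
  rcases lineFiber_eq_empty_or_eq_Icc hv (isCompact_closedBall 0 ρ) (convex_closedBall 0 ρ) w with
    h | ⟨a, b, hab, h⟩
  · exact Or.inl h
  · have hna := neg_mem_lineFiber_closedBall hv (h ▸ left_mem_Icc.2 hab : a ∈ _)
    have hnb := neg_mem_lineFiber_closedBall hv (h ▸ right_mem_Icc.2 hab : b ∈ _)
    rw [h] at hna hnb
    obtain rfl : a = -b := by linarith [hna.2, hnb.1]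
    exact Or.inr ⟨b, h⟩

lemma volume_lineFiber_inter_closedBall_le (hv : ‖v‖ = 1) (hL : IsCompact L) (hLc : Convex ℝ L)
    (ρ : ℝ) (w : (ℝ ∙ v)ᗮ) :
    volume (lineFiber v (L ∩ closedBall 0 ρ) w) ≤
      volume (lineFiber v (steinerSymm v L ∩ closedBall 0 ρ) w) := by
  change volume (lineFiber v L w ∩ lineFiber v (closedBall 0 ρ) w) ≤
    volume (lineFiber v (steinerSymm v L) w ∩ lineFiber v (closedBall 0 ρ) w)
  rcases lineFiber_eq_empty_or_eq_Icc hv hL hLc w with hLw | ⟨a, b, -, hLw⟩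
  · simp [hLw]
  rcases lineFiber_closedBall_eq_empty_or_eq_Icc hv ρ w with hBw | ⟨j, hBw⟩
  · simp [hBw]
  rw [hBw, lineFiber_steinerSymm_of_eq_Icc hv hLw, hLw]
  exact volume_Icc_inter_symm_le a b j

lemma volume_lineFiber_inter_closedBall_lt (hv : ‖v‖ = 1) (hL : IsCompact L) (hLc : Convex ℝ L)
    {w : (ℝ ∙ v)ᗮ} {s t : ℝ} (hs : s • v + (w : E) ∈ interior L \ closedBall 0 ρ)
    (ht : t • v + (w : E) ∈ interior (closedBall 0 ρ) \ L) :
    volume (lineFiber v (L ∩ closedBall 0 ρ) w) <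
      volume (lineFiber v (steinerSymm v L ∩ closedBall 0 ρ) w) := by
  change volume (lineFiber v L w ∩ lineFiber v (closedBall 0 ρ) w) <
    volume (lineFiber v (steinerSymm v L) w ∩ lineFiber v (closedBall 0 ρ) w)
  have hsL := lineFiber_interior_subset v L w hs.1
  have htB := lineFiber_interior_subset v (closedBall 0 ρ) w ht.1
  have hsB : s ∉ lineFiber v (closedBall 0 ρ) w := hs.2
  have htL : t ∉ lineFiber v L w := ht.2
  rcases lineFiber_eq_empty_or_eq_Icc hv hL hLc w with hLw | ⟨a, b, -, hLw⟩
  · simp [hLw] at hsL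
  rcases lineFiber_closedBall_eq_empty_or_eq_Icc hv ρ w with hBw | ⟨j, hBw⟩
  · simp [hBw] at htB
  rw [hBw, lineFiber_steinerSymm_of_eq_Icc hv hLw]
  rw [hLw] at hsL htL ⊢
  rw [hBw] at hsB htB
  rw [interior_Icc] at hsL htB
  exact volume_Icc_inter_symm_lt hsL hsB htB htL

variable [MeasurableSpace E] [BorelSpace E]

/- The symmetrization is taken along the line joining a point of `L` outside the ball to a point
of the ball outside `L`. -/
lemma exists_volume_inter_lt_volume_steinerSymm_inter (hL : IsCompact L) (hLc : Convex ℝ L)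
    (hLB : (interior L \ closedBall 0 ρ).Nonempty)
    (hBL : (interior (closedBall 0 ρ) \ L).Nonempty) :
    ∃ v : E, ‖v‖ = 1 ∧
      volume (L ∩ closedBall 0 ρ) < volume (steinerSymm v L ∩ closedBall 0 ρ) := by
  obtain ⟨x, hx⟩ := hLB
  obtain ⟨y, hy⟩ := hBL
  have hxy : x ≠ y := fun h => hy.2 (h ▸ interior_subset hx.1)
  obtain ⟨v, hv, s, t, w₀, rfl, rfl⟩ := exists_common_line hxy
  refine ⟨v, hv, ?_⟩
  have hmeas : MeasurableSet (L ∩ closedBall 0 ρ) := hL.measurableSet.inter measurableSet_closedBall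
  have hmeasS : MeasurableSet (steinerSymm v L ∩ closedBall 0 ρ) :=
    (isCompact_steinerSymm v hL).measurableSet.inter measurableSet_closedBall
  have hfin : volume (L ∩ closedBall 0 ρ) ≠ ⊤ :=
    ((measure_mono inter_subset_left).trans_lt hL.measure_lt_top).ne
  have hopen : IsOpen {w : (ℝ ∙ v)ᗮ | s • v + (w : E) ∈ interior L \ closedBall 0 ρ ∧
      t • v + (w : E) ∈ interior (closedBall 0 ρ) \ L} :=
    (isOpen_setOf_smul_add_orthogonal_mem (isOpen_interior.sdiff isClosed_closedBall) s).inter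
      (isOpen_setOf_smul_add_orthogonal_mem (isOpen_interior.sdiff hL.isClosed) t)
  rw [volume_eq_lintegral_lineFiber hv hmeas] at hfin
  rw [volume_eq_lintegral_lineFiber hv hmeas, volume_eq_lintegral_lineFiber hv hmeasS]
  exact lintegral_strict_mono_of_ae_le_of_ae_lt_on
    (measurable_volume_lineFiber hmeasS).aemeasurable hfin
    (.of_forall fun w => volume_lineFiber_inter_closedBall_le hv hL hLc ρ w)
    (hopen.measure_pos volume ⟨w₀, hx, hy⟩).ne'
    (.of_forall fun w hw => volume_lineFiber_inter_closedBall_lt hv hL hLc hw.1 hw.2)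

end IntersectionWithBall

section MultiaffineFunctions

variable {ι : Type*} [DecidableEq ι]

/-- `Q` is affine in each variable separately on the nonnegative orthant. -/
def IsMultiaffine (Q : (ι → ℝ) → ℝ) : Prop :=
  ∀ t : ι → ℝ, 0 ≤ t → ∀ i, ∃ c, ∀ s, 0 ≤ s →
    Q (Function.update t i s) = Q (Function.update t i 0) + s * c

namespace IsMultiaffine

variable {Q Q' : (ι → ℝ) → ℝ}

lemma sub (hQ : IsMultiaffine Q) (hQ' : IsMultiaffine Q') :
    IsMultiaffine fun t => Q t - Q' t := by
  intro t ht i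
  obtain ⟨c, hc⟩ := hQ t ht i
  obtain ⟨c', hc'⟩ := hQ' t ht i
  refine ⟨c - c', fun s hs => ?_⟩
  simp only [hc s hs, hc' s hs]
  ring

lemma comp_update (hQ : IsMultiaffine Q) (a : ι) {u : ℝ} (hu : 0 ≤ u) :
    IsMultiaffine fun t => Q (Function.update t a u) := by
  intro t ht i
  rcases eq_or_ne i a with rfl | hia
  · exact ⟨0, fun s _ => by simp⟩
  · obtain ⟨c, hc⟩ := hQ (Function.update t a u) (le_update_iff.2 ⟨hu, fun j _ => ht j⟩) i
    exact ⟨c, fun s hs => by simpa only [Function.update_comm hia] using hc s hs⟩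

lemma update_zero_le_update_one (hQ : IsMultiaffine Q) (hpos : ∀ t, 0 ≤ t → 0 ≤ Q t) (a : ι)
    {t : ι → ℝ} (ht : 0 ≤ t) : Q (Function.update t a 0) ≤ Q (Function.update t a 1) := by
  obtain ⟨c, hc⟩ := hQ t ht a
  have hupdate (s : ℝ) (hs : 0 ≤ s) : 0 ≤ Q (Function.update t a 0) + s * c :=
    hc s hs ▸ hpos _ (le_update_iff.2 ⟨hs, fun j _ => ht j⟩)
  have hslope : 0 ≤ c := by
    by_contra! hneg
    have h0 := hupdate 0 le_rfl
    have h := hupdate ((Q (Function.update t a 0) + 1) / -c) (by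
      have := neg_pos.2 hneg
      rw [zero_mul, add_zero] at h0
      positivity)
    rw [div_mul_eq_mul_div, div_neg, mul_div_cancel_right₀ _ hneg.ne] at h
    linarith
  rw [hc 1 zero_le_one]
  linarith

lemma update_eq (hQ : IsMultiaffine Q) (a : ι) {t : ι → ℝ} (ht : 0 ≤ t) {s : ℝ} (hs : 0 ≤ s) :
    Q (Function.update t a s) = Q (Function.update t a 0) +
      s * (Q (Function.update t a 1) - Q (Function.update t a 0)) := by
  obtain ⟨c, hc⟩ := hQ t ht a
  rw [hc s hs, hc 1 zero_le_one]
  ring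

/- Splitting off one variable at a time writes `Q` as `Q₀ + tₐ Q₁` with `Q₀` and `Q₁` again
multiaffine and nonnegative. -/
lemma exists_polynomial_of_nonneg (hQ : IsMultiaffine Q) (hpos : ∀ t, 0 ≤ t → 0 ≤ Q t)
    (J : Finset ι) :
    ∃ p : Polynomial ℝ, (∀ n, 0 ≤ p.coeff n) ∧
      ∀ s, 0 ≤ s → Q (fun i => if i ∈ J then s else 0) = p.eval s := by
  induction J using Finset.induction_on generalizing Q with
  | empty => exact ⟨.C (Q 0), fun n => by
      rw [Polynomial.coeff_C]
      split_ifs <;> simp [hpos], fun s _ => by simp [Pi.zero_def]⟩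
  | insert a J _ ih =>
    have h0 := hQ.comp_update a le_rfl
    obtain ⟨p₀, hp₀, hQ₀⟩ :=
      ih h0 fun t ht => hpos _ (le_update_iff.2 ⟨le_rfl, fun j _ => ht j⟩)
    obtain ⟨p₁, hp₁, hQ₁⟩ := ih ((hQ.comp_update a zero_le_one).sub h0)
      fun t ht => sub_nonneg.2 (hQ.update_zero_le_update_one hpos a ht)
    refine ⟨p₀ + .X * p₁, fun n => ?_, fun s hs => ?_⟩
    · cases n with
      | zero => simpa using hp₀ 0
      | succ n =>
        rw [Polynomial.coeff_add, Polynomial.coeff_X_mul]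
        exact add_nonneg (hp₀ _) (hp₁ n)
    · have hinsert : (fun i => if i ∈ insert a J then s else 0) =
          Function.update (fun i => if i ∈ J then s else 0) a s := by
        ext i
        rcases eq_or_ne i a with rfl | hia <;> simp [*]
      rw [hinsert, hQ.update_eq a (fun i => by dsimp only; split_ifs <;> simp [hs]) hs, hQ₁ s hs,
        hQ₀ s hs]
      simp

end IsMultiaffine

end MultiaffineFunctions

section Polynomials

open Polynomial Filter Topology

lemma natDegree_le_of_abs_eval_le {p : ℝ[X]} {M : ℝ} {n : ℕ}
    (h : ∀ s : ℝ, 0 ≤ s → |p.eval s| ≤ M * (1 + s) ^ n) : p.natDegree ≤ n := by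
  by_contra! hlt
  have hmonic : ((1 + X : ℝ[X]) ^ n).Monic := by
    rw [add_comm, ← C_1]
    exact (monic_X_add_C 1).pow n
  have hdeg : ((1 + X : ℝ[X]) ^ n).degree < p.degree := by
    refine degree_lt_degree ?_
    rwa [natDegree_pow, add_comm, ← C_1, natDegree_X_add_C, mul_one]
  have htendsto := p.abs_div_tendsto_atTop_atTop_of_degree_gt _ hdeg hmonic.ne_zero
  obtain ⟨s, hs, hs0⟩ :=
    ((htendsto.eventually (eventually_gt_atTop M)).and (eventually_ge_atTop 0)).exists
  have hpow : 0 < (1 + s) ^ n := by positivity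
  rw [eval_pow, eval_add, eval_one, eval_X, abs_div, abs_of_pos hpow, lt_div_iff₀ hpow] at hs
  exact hs.not_ge (h s hs0)

lemma coeff_eq_sum_eval_mul_coeff_basis {p : ℝ[X]} {n : ℕ} (hp : p.natDegree ≤ n) (i : ℕ) :
    p.coeff i = ∑ j ∈ Finset.range (n + 1), p.eval ((j : ℝ) + 1) *
      (Lagrange.basis (Finset.range (n + 1)) (fun j : ℕ => (j : ℝ) + 1) j).coeff i := by
  have hinterp : p = Lagrange.interpolate (Finset.range (n + 1)) (fun j : ℕ => (j : ℝ) + 1)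
      fun j => p.eval ((j : ℝ) + 1) := by
    refine Lagrange.eq_interpolate_of_eval_eq _ (fun a _ b _ hab => by simpa using hab) ?_
      fun j _ => rfl
    rw [Finset.card_range]
    exact degree_le_natDegree.trans_lt (by exact_mod_cast Nat.lt_succ_of_le hp)
  conv_lhs => rw [hinterp]
  simp [Lagrange.interpolate_apply]

lemma tendsto_coeff_of_tendsto_eval {α : Type*} {l : Filter α} {n : ℕ} {p : α → ℝ[X]} {q : ℝ[X]}
    (hp : ∀ a, (p a).natDegree ≤ n) (hq : q.natDegree ≤ n)
    (h : ∀ s : ℝ, 0 < s → Tendsto (fun a => (p a).eval s) l (𝓝 (q.eval s))) (i : ℕ) :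
    Tendsto (fun a => (p a).coeff i) l (𝓝 (q.coeff i)) := by
  simp only [coeff_eq_sum_eval_mul_coeff_basis (hp _) i, coeff_eq_sum_eval_mul_coeff_basis hq i]
  exact tendsto_finsetSum _ fun j _ => (h _ (by positivity)).mul_const _

lemma tendsto_of_eval_sub_le_of_le_eval_add {α : Type*} {l : Filter α} {q : ℝ[X]} {f δ : α → ℝ}
    {s : ℝ} (hδ : Tendsto δ l (𝓝 0)) (hlower : ∀ᶠ a in l, q.eval (s - δ a) ≤ f a)
    (hupper : ∀ᶠ a in l, f a ≤ q.eval (s + δ a)) : Tendsto f l (𝓝 (q.eval s)) := by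
  refine tendsto_of_tendsto_of_tendsto_of_le_of_le' ?_ ?_ hlower hupper
  · simpa only [sub_zero, Function.comp_def] using (q.continuous.tendsto _).comp (hδ.const_sub s)
  · simpa only [add_zero, Function.comp_def] using (q.continuous.tendsto _).comp (hδ.const_add s)

end Polynomials

section Zonotopes

variable {E ι : Type*} [NormedAddCommGroup E] [InnerProductSpace ℝ E] [Fintype ι]

/-- The zonotope with generators `θ i`, scaled by `t i`: the Minkowski sum of the segments
`[-t i • θ i, t i • θ i]`. -/
def zonotope (θ : ι → E) (t : ι → ℝ) : Set E := ∑ i, symSegment (θ i) (t i)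

lemma mem_zonotope {θ : ι → E} {t : ι → ℝ} {z : E} :
    z ∈ zonotope θ t ↔ ∃ a : ι → ℝ, (∀ i, a i ∈ Icc (-t i) (t i)) ∧ ∑ i, a i • θ i = z := by
  rw [zonotope, mem_fintype_sum]
  constructor
  · rintro ⟨g, hg, hz⟩
    choose a ha haθ using hg
    exact ⟨a, ha, by simpa only [haθ] using hz⟩
  · rintro ⟨a, ha, hz⟩
    exact ⟨fun i => a i • θ i, fun i => mem_image_of_mem _ (ha i), hz⟩

lemma isCompact_zonotope (θ : ι → E) (t : ι → ℝ) : IsCompact (zonotope θ t) :=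
  Finset.sum_induction _ IsCompact (fun _ _ => IsCompact.add) isCompact_singleton
    fun i _ => isCompact_symSegment (θ i) (t i)

lemma convex_zonotope (θ : ι → E) (t : ι → ℝ) : Convex ℝ (zonotope θ t) :=
  convex_sum _ fun i _ =>
    (convex_Icc _ _).is_linear_image (LinearMap.toSpanSingleton ℝ E (θ i)).isLinear

lemma zonotope_update [DecidableEq ι] (θ : ι → E) (t : ι → ℝ) (i : ι) (s : ℝ) :
    zonotope θ (Function.update t i s) =
      zonotope θ (Function.update t i 0) + symSegment (θ i) s := by
  have hsplit (s : ℝ) : zonotope θ (Function.update t i s) =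
      (∑ j ∈ Finset.univ.erase i, symSegment (θ j) (t j)) + symSegment (θ i) s := by
    rw [zonotope, ← Finset.sum_erase_add _ _ (Finset.mem_univ i), Function.update_self]
    exact congrArg (· + _) (Finset.sum_congr rfl fun j hj => by
      rw [Function.update_of_ne (Finset.ne_of_mem_erase hj)])
  have hzero : symSegment (θ i) 0 = 0 := by
    rw [symSegment, neg_zero, Icc_self, image_singleton, zero_smul, singleton_zero]
  rw [hsplit s, hsplit 0, hzero, add_zero]

lemma zonotope_subset_closedBall {θ : ι → E} {b : ℝ} (hb0 : 0 ≤ b)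
    (hb : ∀ u : E, ∑ i, |⟪θ i, u⟫| ≤ b * ‖u‖) {s : ℝ} (hs : 0 ≤ s) :
    zonotope θ (fun _ => s) ⊆ closedBall 0 (s * b) := by
  intro z hz
  obtain ⟨a, ha, haz⟩ := mem_zonotope.1 hz
  have hinner : ‖z‖ ^ 2 ≤ s * b * ‖z‖ := calc
    ‖z‖ ^ 2 = ∑ i, a i * ⟪θ i, z⟫ := by
      rw [← real_inner_self_eq_norm_sq]
      conv_lhs => rw [← haz, sum_inner]
      simp only [real_inner_smul_left, haz]
    _ ≤ ∑ i, s * |⟪θ i, z⟫| := Finset.sum_le_sum fun i _ => by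
      refine (le_abs_self _).trans ?_
      rw [abs_mul]
      exact mul_le_mul_of_nonneg_right (abs_le.2 (ha i)) (abs_nonneg _)
    _ = s * ∑ i, |⟪θ i, z⟫| := by rw [Finset.mul_sum]
    _ ≤ s * b * ‖z‖ := by rw [mul_assoc]; exact mul_le_mul_of_nonneg_left (hb z) hs
  rw [mem_closedBall_zero_iff]
  rcases (norm_nonneg z).eq_or_lt with h0 | hpos
  · exact h0 ▸ mul_nonneg hs hb0
  · exact le_of_mul_le_mul_right (by rwa [← sq]) hpos

lemma closedBall_subset_zonotope [CompleteSpace E] {θ : ι → E} {a : ℝ}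
    (ha : ∀ u : E, a * ‖u‖ ≤ ∑ i, |⟪θ i, u⟫|) {s : ℝ} (hs : 0 ≤ s) :
    closedBall 0 (s * a) ⊆ zonotope θ fun _ => s := by
  intro z hz
  by_contra hzn
  obtain ⟨f, c, hfc, hcz⟩ := geometric_hahn_banach_closed_point (convex_zonotope θ _)
    (isCompact_zonotope θ _).isClosed hzn
  obtain ⟨w, rfl⟩ := (InnerProductSpace.toDual ℝ E).surjective f
  simp only [InnerProductSpace.toDual_apply_apply] at hfc hcz
  have hmem : ∑ i, (s * SignType.sign ⟪θ i, w⟫ : ℝ) • θ i ∈ zonotope θ fun _ => s := by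
    refine mem_zonotope.2 ⟨_, fun i => ?_, rfl⟩
    rcases lt_trichotomy ⟪θ i, w⟫ 0 with h | h | h <;> simp [h, hs]
  have hsupport : ⟪w, ∑ i, (s * SignType.sign ⟪θ i, w⟫ : ℝ) • θ i⟫ = s * ∑ i, |⟪θ i, w⟫| := by
    rw [inner_sum, Finset.mul_sum]
    refine Finset.sum_congr rfl fun i _ => ?_
    rw [inner_smul_right, real_inner_comm, mul_assoc, sign_mul_self]
  refine lt_irrefl ⟪w, z⟫ ?_
  calc ⟪w, z⟫ ≤ ‖w‖ * ‖z‖ := real_inner_le_norm w z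
    _ ≤ ‖w‖ * (s * a) := by
      gcongr
      exact mem_closedBall_zero_iff.1 hz
    _ = s * (a * ‖w‖) := by ring
    _ ≤ s * ∑ i, |⟪θ i, w⟫| := mul_le_mul_of_nonneg_left (ha w) hs
    _ < c := hsupport ▸ hfc _ hmem
    _ < ⟪w, z⟫ := hcz

end Zonotopes

section ZonotopeVolumes

variable {E ι : Type*} [NormedAddCommGroup E] [InnerProductSpace ℝ E] [FiniteDimensional ℝ E]
  [MeasurableSpace E] [BorelSpace E] [Fintype ι]

lemma isMultiaffine_volume_add_zonotope [DecidableEq ι] (θ : ι → E) {K : Set E} (hK : IsCompact K)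
    (hKc : Convex ℝ K) : IsMultiaffine fun t => volume.real (K + zonotope θ t) := by
  intro t _ i
  obtain ⟨c, hc⟩ := exists_volume_add_symSegment_eq (θ i)
    (hK.add (isCompact_zonotope θ (Function.update t i 0)))
    (hKc.add (convex_zonotope θ (Function.update t i 0)))
  refine ⟨c, fun s hs => ?_⟩
  simp only [zonotope_update θ t i s, ← add_assoc]
  exact hc s hs

lemma exists_volume_add_zonotope_le (θ : ι → E) {K : Set E} (hK : Bornology.IsBounded K) :
    ∃ M : ℝ, ∀ s : ℝ, 0 ≤ s →
      volume.real (K + zonotope θ fun _ => s) ≤ M * (1 + s) ^ Module.finrank ℝ E := by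
  obtain ⟨ρ, hρ0, hρ⟩ := hK.subset_closedBall_lt 0 (0 : E)
  set b := ∑ i, ‖θ i‖
  have hb0 : 0 ≤ b := Finset.sum_nonneg fun _ _ => norm_nonneg _
  have hb (u : E) : ∑ i, |⟪θ i, u⟫| ≤ b * ‖u‖ := by
    rw [Finset.sum_mul]
    exact Finset.sum_le_sum fun i _ => abs_real_inner_le_norm _ _
  refine ⟨(ρ + b) ^ Module.finrank ℝ E * volume.real (closedBall (0 : E) 1), fun s hs => ?_⟩
  have hsub : K + zonotope θ (fun _ => s) ⊆ closedBall 0 ((ρ + b) * (1 + s)) := calc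
    K + zonotope θ (fun _ => s) ⊆ closedBall (0 : E) ρ + closedBall 0 (s * b) :=
      add_subset_add hρ (zonotope_subset_closedBall hb0 hb hs)
    _ = closedBall 0 (ρ + s * b) := by
      rw [closedBall_add_closedBall hρ0.le (by positivity), add_zero]
    _ ⊆ closedBall 0 ((ρ + b) * (1 + s)) := closedBall_subset_closedBall (by nlinarith)
  calc _ ≤ volume.real (closedBall (0 : E) ((ρ + b) * (1 + s))) :=
        measureReal_mono hsub (isCompact_closedBall _ _).measure_lt_top.ne
    _ = _ := by
      rw [Measure.addHaar_real_closedBall' volume (0 : E) (by positivity), mul_pow]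
      ring

lemma two_mul_volume_real_steinerSymm_add_le {v : E} (hv : ‖v‖ = 1) {K Z : Set E}
    (hK : IsCompact K) (hKc : Convex ℝ K) (hZ : IsCompact Z) (hZc : Convex ℝ Z) :
    2 * volume.real (steinerSymm v K + Z) ≤
      volume.real (K + Z) + volume.real ((ℝ ∙ v)ᗮ.reflection '' K + Z) := by
  have hfin : volume (K + Z) ≠ ⊤ := (hK.add hZ).measure_lt_top.ne
  have hfin' : volume ((ℝ ∙ v)ᗮ.reflection '' K + Z) ≠ ⊤ :=
    ((hK.image (LinearIsometryEquiv.continuous _)).add hZ).measure_lt_top.ne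
  have h := ENNReal.toReal_mono (ENNReal.add_ne_top.2 ⟨hfin, hfin'⟩)
    (two_mul_volume_steinerSymm_add_le hv hK hKc hZ hZc)
  rwa [ENNReal.toReal_mul, ENNReal.toReal_add hfin hfin'] at h

lemma exists_polynomial_volume_add_zonotope (θ : ι → E) {v : E} (hv : ‖v‖ = 1) {K : Set E}
    (hK : IsCompact K) (hKc : Convex ℝ K) :
    ∃ p : Polynomial ℝ, (∀ n, 0 ≤ p.coeff n) ∧ p.natDegree ≤ Module.finrank ℝ E ∧
      ∀ s : ℝ, 0 ≤ s → p.eval s =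
        volume.real (K + zonotope θ fun _ => s) +
        volume.real ((ℝ ∙ v)ᗮ.reflection '' K + zonotope θ fun _ => s) -
        2 * volume.real (steinerSymm v K + zonotope θ fun _ => s) := by
  classical
  set K' := (ℝ ∙ v)ᗮ.reflection '' K
  have hK' : IsCompact K' := hK.image (LinearIsometryEquiv.continuous _)
  have hK'c : Convex ℝ K' := hKc.is_linear_image
    (ℝ ∙ v)ᗮ.reflection.toLinearEquiv.toLinearMap.isLinear
  have hsymm := isMultiaffine_volume_add_zonotope θ (isCompact_steinerSymm v hK)
    (convex_steinerSymm v hKc)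
  have hmulti := ((isMultiaffine_volume_add_zonotope θ hK hKc).sub hsymm).sub
    (hsymm.sub (isMultiaffine_volume_add_zonotope θ hK' hK'c))
  have hle (t : ι → ℝ) := two_mul_volume_real_steinerSymm_add_le hv hK hKc
    (isCompact_zonotope θ t) (convex_zonotope θ t)
  obtain ⟨p, hp, heval⟩ :=
    hmulti.exists_polynomial_of_nonneg (fun t _ => by linarith [hle t]) Finset.univ
  simp only [Finset.mem_univ, if_true] at heval
  refine ⟨p, hp, ?_, fun s hs => by rw [← heval s hs]; ring⟩
  obtain ⟨M, hM⟩ := exists_volume_add_zonotope_le θ hK.isBounded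
  obtain ⟨M', hM'⟩ := exists_volume_add_zonotope_le θ hK'.isBounded
  refine natDegree_le_of_abs_eval_le (M := M + M') fun s hs => ?_
  rw [← heval s hs, abs_of_nonneg (by linarith [hle fun _ => s])]
  have hnonneg : 0 ≤ volume.real (steinerSymm v K + zonotope θ fun _ => s) := measureReal_nonneg
  linarith [hM s hs, hM' s hs]

end ZonotopeVolumes

section BallsAsLimitsOfZonotopes

lemma exists_simpleFunc_integral_norm_sub_le {α F : Type*} [MeasurableSpace α] {μ : Measure α}
    [NormedAddCommGroup F] {f : α → F} (hf : Integrable f μ) {ε : ℝ} (hε : 0 < ε) :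
    ∃ g : SimpleFunc α F, Integrable g μ ∧ ∫ x, ‖f x - g x‖ ∂μ ≤ ε := by
  obtain ⟨g, hfg, hg⟩ := (memLp_one_iff_integrable.2 hf).exists_simpleFunc_eLpNorm_sub_lt
    ENNReal.one_ne_top (ENNReal.ofReal_pos.2 hε).ne'
  have hgint := memLp_one_iff_integrable.1 hg
  refine ⟨g, hgint, ?_⟩
  rw [integral_norm_eq_lintegral_enorm (hf.sub hgint).aestronglyMeasurable
    (f := fun x => f x - g x)]
  rw [eLpNorm_one_eq_lintegral_enorm] at hfg
  exact ENNReal.toReal_le_of_le_ofReal hε.le hfg.le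

variable {E : Type*} [NormedAddCommGroup E] [InnerProductSpace ℝ E]

lemma integral_abs_inner_simpleFunc {α : Type*} [MeasurableSpace α] {μ : Measure α}
    {g : SimpleFunc α E} (hg : Integrable g μ) (u : E) :
    ∫ x, |⟪g x, u⟫| ∂μ = ∑ y ∈ g.range, μ.real (g ⁻¹' {y}) * |⟪y, u⟫| := by
  have hint : Integrable (g.map fun y => |⟪y, u⟫|) μ := (hg.inner_const u).abs
  calc ∫ x, |⟪g x, u⟫| ∂μ = (g.map fun y => |⟪y, u⟫|).integral μ :=
        (SimpleFunc.integral_eq_integral _ hint).symm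
    _ = _ := by
      rw [SimpleFunc.map_integral g _ hg (by simp only [inner_zero_left, abs_zero])]
      simp only [smul_eq_mul]

lemma abs_integral_abs_inner_sub_le {α : Type*} [MeasurableSpace α] {μ : Measure α} {f g : α → E}
    (hf : Integrable f μ) (hg : Integrable g μ) (u : E) :
    |∫ x, |⟪g x, u⟫| ∂μ - ∫ x, |⟪f x, u⟫| ∂μ| ≤ (∫ x, ‖f x - g x‖ ∂μ) * ‖u‖ := by
  rw [← integral_sub (hg.inner_const u).abs (hf.inner_const u).abs, ← integral_mul_const]
  refine abs_integral_le_integral_abs.trans (integral_mono_of_nonneg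
    (Filter.Eventually.of_forall fun x => abs_nonneg _) ((hf.sub hg).norm.mul_const _)
    (Filter.Eventually.of_forall fun x => (abs_abs_sub_abs_le_abs_sub _ _).trans ?_))
  dsimp only
  rw [← inner_sub_left, norm_sub_rev]
  exact abs_real_inner_le_norm _ _

variable [FiniteDimensional ℝ E] [MeasurableSpace E] [BorelSpace E]

/-- The integral of `|⟪x, u⟫|` over the unit ball, a rotation invariant multiple of the norm. -/
noncomputable def absInnerIntegral (u : E) : ℝ := ∫ x in closedBall (0 : E) 1, |⟪x, u⟫|

lemma absInnerIntegral_map (e : E ≃ₗᵢ[ℝ] E) (u : E) :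
    absInnerIntegral (e u) = absInnerIntegral u := by
  rw [absInnerIntegral, ← e.measurePreserving.setIntegral_preimage_emb
    e.toHomeomorph.measurableEmbedding, LinearIsometryEquiv.preimage_closedBall, map_zero]
  simp only [LinearIsometryEquiv.inner_map_map, absInnerIntegral]

lemma absInnerIntegral_smul (a : ℝ) (u : E) :
    absInnerIntegral (a • u) = |a| * absInnerIntegral u := by
  simp only [absInnerIntegral, inner_smul_right, abs_mul, integral_const_mul]

lemma absInnerIntegral_pos {u : E} (hu : u ≠ 0) : 0 < absInnerIntegral u := by
  have hcont : Continuous fun x : E => |⟪x, u⟫| := by fun_prop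
  rw [absInnerIntegral, setIntegral_pos_iff_support_of_nonneg_ae
    (Filter.Eventually.of_forall fun x => abs_nonneg _)
    (hcont.continuousOn.integrableOn_compact (isCompact_closedBall _ _))]
  have hopen : IsOpen ({x : E | 0 < ⟪x, u⟫} ∩ ball 0 1) :=
    (isOpen_lt continuous_const (by fun_prop)).inter isOpen_ball
  have hnorm : 0 < ‖u‖ := norm_pos_iff.2 hu
  refine (hopen.measure_pos volume ⟨(2 * ‖u‖)⁻¹ • u, ?_, ?_⟩).trans_le
    (measure_mono fun x hx => ⟨?_, ball_subset_closedBall hx.2⟩)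
  · rw [mem_ofPred_eq, real_inner_smul_left, real_inner_self_eq_norm_sq]
    positivity
  · rw [mem_ball_zero_iff, norm_smul, Real.norm_of_nonneg (by positivity), mul_inv, mul_assoc,
      inv_mul_cancel₀ hnorm.ne']
    norm_num
  · exact abs_ne_zero.2 (ne_of_gt hx.1)

lemma exists_absInnerIntegral_eq_mul_norm :
    ∃ c : ℝ, 0 < c ∧ ∀ u : E, absInnerIntegral u = c * ‖u‖ := by
  rcases subsingleton_or_nontrivial E with hE | hE
  · exact ⟨1, one_pos, fun u => by simp [Subsingleton.elim u 0, absInnerIntegral]⟩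
  obtain ⟨e, he⟩ := exists_norm_eq E (zero_le_one' ℝ)
  refine ⟨absInnerIntegral e, absInnerIntegral_pos (norm_pos_iff.1 (by simp [he])), fun u => ?_⟩
  have hnorm : ‖u‖ = ‖‖u‖ • e‖ := by rw [norm_smul, norm_norm, he, mul_one]
  have hreflect := absInnerIntegral_map (ℝ ∙ (u - ‖u‖ • e))ᗮ.reflection u
  rw [Submodule.reflection_sub hnorm, absInnerIntegral_smul, abs_norm] at hreflect
  rw [← hreflect, mul_comm]

lemma exists_abs_sum_abs_inner_sub_norm_le {δ : ℝ} (hδ : 0 < δ) :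
    ∃ (F : Finset E) (θ : F → E), ∀ u : E, |∑ i, |⟪θ i, u⟫| - ‖u‖| ≤ δ * ‖u‖ := by
  obtain ⟨c, hc, hnorm⟩ := exists_absInnerIntegral_eq_mul_norm (E := E)
  set μ : Measure E := volume.restrict (closedBall (0 : E) 1)
  have hid : Integrable (fun x : E => x) μ :=
    continuous_id.continuousOn.integrableOn_compact (isCompact_closedBall _ _)
  obtain ⟨g, hg, hgδ⟩ := exists_simpleFunc_integral_norm_sub_le hid (mul_pos hδ hc)
  refine ⟨g.range, fun y => (c⁻¹ * μ.real (g ⁻¹' {(y : E)})) • (y : E), fun u => ?_⟩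
  have hsum : ∑ y : g.range, |⟪(c⁻¹ * μ.real (g ⁻¹' {(y : E)})) • (y : E), u⟫| =
      c⁻¹ * ∫ x, |⟪g x, u⟫| ∂μ := by
    rw [integral_abs_inner_simpleFunc hg, Finset.mul_sum, ← Finset.sum_coe_sort g.range]
    refine Finset.sum_congr rfl fun y _ => ?_
    rw [real_inner_smul_left, abs_mul, abs_of_nonneg (by positivity), mul_assoc]
  have hu : ‖u‖ = c⁻¹ * ∫ x, |⟪x, u⟫| ∂μ := by
    rw [show ∫ x, |⟪x, u⟫| ∂μ = c * ‖u‖ from hnorm u, inv_mul_cancel_left₀ hc.ne']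
  calc |∑ y : g.range, |⟪(c⁻¹ * μ.real (g ⁻¹' {(y : E)})) • (y : E), u⟫| - ‖u‖| =
      c⁻¹ * |∫ x, |⟪g x, u⟫| ∂μ - ∫ x, |⟪x, u⟫| ∂μ| := by
        conv_lhs => rw [hsum, hu]
        rw [← mul_sub, abs_mul, abs_of_pos (inv_pos.2 hc)]
    _ ≤ c⁻¹ * (δ * c * ‖u‖) := by
        gcongr
        exact (abs_integral_abs_inner_sub_le hid hg u).trans (by gcongr)
    _ = δ * ‖u‖ := by field_simp

lemma exists_zonotope_approximating_closedBall {δ : ℝ} (hδ : 0 < δ) :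
    ∃ (F : Finset E) (θ : F → E), ∀ s : ℝ, 0 ≤ s →
      closedBall 0 (s * (1 - δ)) ⊆ zonotope θ (fun _ => s) ∧
      zonotope θ (fun _ => s) ⊆ closedBall 0 (s * (1 + δ)) := by
  obtain ⟨F, θ, hθ⟩ := exists_abs_sum_abs_inner_sub_norm_le (E := E) hδ
  refine ⟨F, θ, fun s hs => ⟨closedBall_subset_zonotope (fun u => ?_) hs,
    zonotope_subset_closedBall (by positivity) (fun u => ?_) hs⟩⟩
  all_goals
    have := abs_le.1 (hθ u)
    linarith

end BallsAsLimitsOfZonotopes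

section ConvexBodies

open TopologicalSpace

variable {E : Type*} [NormedAddCommGroup E] [NormedSpace ℝ E]

lemma subset_add_closedBall_dist (K L : ConvexBody E) :
    (K : Set E) ⊆ (L : Set E) + closedBall 0 (dist K L) := by
  rw [L.isCompact.add_closedBall_zero dist_nonneg]
  intro x hx
  rw [mem_cthickening_iff, ← edist_dist, ← ConvexBody.hausdorffEDist_coe]
  exact infEDist_le_hausdorffEDist_of_mem hx

lemma isClosed_setOf_convex_nonemptyCompacts :
    IsClosed {K : NonemptyCompacts E | Convex ℝ (K : Set E)} := by
  refine isClosed_of_closure_subset fun M hM x hx y hy a b ha hb hab => ?_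
  rw [M.isCompact.isClosed.mem_iff_infDist_zero M.nonempty]
  refine le_antisymm (le_of_forall_pos_le_add fun ε hε => ?_) infDist_nonneg
  obtain ⟨L, hL, hML⟩ := Metric.mem_closure_iff.1 hM (ε / 2) (half_pos hε)
  rw [NonemptyCompacts.dist_eq] at hML
  have hfin := hausdorffEDist_ne_top_of_nonempty_of_bounded M.nonempty L.nonempty
    M.isCompact.isBounded L.isCompact.isBounded
  obtain ⟨x', hx', hxx'⟩ := exists_dist_lt_of_hausdorffDist_lt hx hML hfin
  obtain ⟨y', hy', hyy'⟩ := exists_dist_lt_of_hausdorffDist_lt hy hML hfin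
  obtain ⟨z, hz, hzz'⟩ := exists_dist_lt_of_hausdorffDist_lt' (hL hx' hy' ha hb hab) hML hfin
  have hcomb : dist (a • x + b • y) (a • x' + b • y') ≤ ε / 2 := calc
    _ ≤ dist (a • x) (a • x') + dist (b • y) (b • y') := dist_add_add_le _ _ _ _
    _ = a * dist x x' + b * dist y y' := by
      rw [dist_smul₀, dist_smul₀, Real.norm_of_nonneg ha, Real.norm_of_nonneg hb]
    _ ≤ a * (ε / 2) + b * (ε / 2) := by gcongr
    _ = ε / 2 := by rw [← add_mul, hab, one_mul]
  calc _ ≤ dist (a • x + b • y) z := infDist_le_dist_of_mem hz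
    _ ≤ dist (a • x + b • y) (a • x' + b • y') + dist (a • x' + b • y') z := dist_triangle _ _ _
    _ ≤ 0 + ε := by
      rw [dist_comm _ z]
      linarith

lemma isCompact_setOf_convexBody_subset {S : Set E} (hS : IsCompact S) :
    IsCompact {K : ConvexBody E | (K : Set E) ⊆ S} := by
  let f (K : ConvexBody E) : NonemptyCompacts E := ⟨⟨K, K.isCompact⟩, K.nonempty⟩
  have hf : Isometry f := Isometry.of_dist_eq fun K L => NonemptyCompacts.dist_eq
  have himage : f '' {K | (K : Set E) ⊆ S} =
      {K : NonemptyCompacts E | (K : Set E) ⊆ S} ∩ {K | Convex ℝ (K : Set E)} := by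
    ext K
    constructor
    · rintro ⟨K, hK, rfl⟩
      exact ⟨hK, K.convex⟩
    · rintro ⟨hKS, hKc⟩
      exact ⟨⟨K, hKc, K.isCompact, K.nonempty⟩, hKS, rfl⟩
  rw [hf.isEmbedding.isCompact_iff, himage]
  exact (NonemptyCompacts.isCompact_subsets_of_isCompact hS).inter_right
    isClosed_setOf_convex_nonemptyCompacts

lemma upperSemicontinuous_measure_convexBody [MeasurableSpace E] [OpensMeasurableSpace E]
    (μ : Measure E) [IsFiniteMeasure μ] : UpperSemicontinuous fun K : ConvexBody E => μ K := by
  intro K y hy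
  have htendsto := (tendsto_measure_cthickening_of_isClosed (μ := μ)
    ⟨1, one_pos, measure_ne_top _ _⟩ K.isClosed).mono_left (nhdsWithin_le_nhds (s := Ioi 0))
  obtain ⟨δ, hδy, hδ⟩ :=
    ((htendsto.eventually (gt_mem_nhds hy)).and self_mem_nhdsWithin).exists
  filter_upwards [ball_mem_nhds K hδ] with L hL
  refine (measure_mono ?_).trans_lt hδy
  rw [← K.isCompact.add_closedBall_zero (le_of_lt hδ)]
  exact (subset_add_closedBall_dist L K).trans
    (add_subset_add_left (closedBall_subset_closedBall (le_of_lt hL)))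

end ConvexBodies

section BodiesOfEqualVolume

variable {E : Type*} [NormedAddCommGroup E] [NormedSpace ℝ E] [FiniteDimensional ℝ E]
  [MeasurableSpace E] [BorelSpace E]

lemma interior_nonempty_of_convex_of_measure_ne_zero {μ : Measure E} [μ.IsAddHaarMeasure]
    {B : Set E} (hB : IsClosed B) (hBc : Convex ℝ B) (h : μ B ≠ 0) : (interior B).Nonempty := by
  by_contra hempty
  have hfrontier := hBc.addHaar_frontier μ
  rw [hB.frontier_eq, not_nonempty_iff_eq_empty.1 hempty, sdiff_empty] at hfrontier
  exact h hfrontier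

lemma subset_of_interior_subset_of_measure_ne_zero {μ : Measure E} [μ.IsAddHaarMeasure]
    {A B : Set E} (hA : IsClosed A) (hB : IsClosed B) (hBc : Convex ℝ B) (h : μ B ≠ 0)
    (hBA : interior B ⊆ A) : B ⊆ A := calc
  B ⊆ closure B := subset_closure
  _ = closure (interior B) := (hBc.closure_interior_eq_closure_of_nonempty_interior
    (interior_nonempty_of_convex_of_measure_ne_zero hB hBc h)).symm
  _ ⊆ A := hA.closure_subset_iff.2 hBA

lemma eq_of_subset_of_measure_eq {μ : Measure E} [μ.IsAddHaarMeasure] {A B : Set E}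
    (hA : IsClosed A) (hB : IsCompact B) (hBc : Convex ℝ B) (h : μ B ≠ 0) (hAB : A ⊆ B)
    (hμ : μ A = μ B) : A = B := by
  refine hAB.antisymm (subset_of_interior_subset_of_measure_ne_zero hA hB.isClosed hBc h
    (sdiff_eq_empty.1 (((isOpen_interior.sdiff hA).measure_eq_zero_iff μ).1
      (measure_mono_null (sdiff_subset_sdiff_left interior_subset) ?_))))
  rw [measure_sdiff hAB hA.measurableSet.nullMeasurableSet
    ((measure_mono hAB).trans_lt hB.measure_lt_top).ne, hμ, tsub_self]

lemma interior_diff_nonempty_of_measure_eq {μ : Measure E} [μ.IsAddHaarMeasure] {A B : Set E}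
    (hA : IsCompact A) (hAc : Convex ℝ A) (hB : IsCompact B) (hBc : Convex ℝ B) (h : μ B ≠ 0)
    (hμ : μ A = μ B) (hAB : A ≠ B) : (interior A \ B).Nonempty := by
  by_contra hempty
  rw [not_nonempty_iff_eq_empty, sdiff_eq_empty] at hempty
  exact hAB (eq_of_subset_of_measure_eq hA.isClosed hB hBc h
    (subset_of_interior_subset_of_measure_ne_zero hB.isClosed hA.isClosed hAc (hμ ▸ h) hempty) hμ)

end BodiesOfEqualVolume

section SteinerPolynomials

open Polynomial Filter Topology

local notation "𝔼" => EuclideanSpace ℝ (Fin d)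

/-- The Steiner polynomial of a convex body `K`, whose value at `ε` is the volume of the parallel
body `K + ε B` when `V` is the family of intrinsic volumes. -/
noncomputable def steinerPolynomial (V : ℕ → Set 𝔼 → ℝ)
    (K : ConvexBody 𝔼) : ℝ[X] :=
  ∑ i ∈ Finset.range (d + 1), C (unitBallVol (d - i) * V i K) * X ^ (d - i)

/-- The Steiner symmetral of a convex body, as a convex body. -/
def steinerSymmBody {E : Type*} [NormedAddCommGroup E] [InnerProductSpace ℝ E] (v : E)
    (K : ConvexBody E) : ConvexBody E :=
  ⟨steinerSymm v K, convex_steinerSymm v K.convex, isCompact_steinerSymm v K.isCompact,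
    steinerSymm_nonempty v K.nonempty⟩

lemma unitBallVol_pos (m : ℕ) : 0 < unitBallVol m :=
  ENNReal.toReal_pos (measure_closedBall_pos volume _ one_pos).ne' measure_closedBall_lt_top.ne

variable {V : ℕ → Set (EuclideanSpace ℝ (Fin d)) → ℝ}

lemma natDegree_steinerPolynomial_le (V : ℕ → Set 𝔼 → ℝ)
    (K : ConvexBody 𝔼) : (steinerPolynomial V K).natDegree ≤ d :=
  natDegree_sum_le_of_forall_le _ _ fun _ _ =>
    (natDegree_C_mul_X_pow_le _ _).trans (Nat.sub_le _ _)

lemma coeff_steinerPolynomial (V : ℕ → Set 𝔼 → ℝ)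
    (K : ConvexBody 𝔼) {k : ℕ} (hk : k ≤ d) :
    (steinerPolynomial V K).coeff (d - k) = unitBallVol (d - k) * V k K := by
  rw [steinerPolynomial, finsetSum_coeff,
    Finset.sum_eq_single_of_mem k (by simpa [Nat.lt_succ_iff])]
  · rw [coeff_C_mul_X_pow, if_pos rfl]
  · intro i hi hik
    rw [coeff_C_mul_X_pow, if_neg]
    have := Finset.mem_range.1 hi
    omega

namespace IsIntrinsicVolumes

lemma eval_steinerPolynomial (hV : IsIntrinsicVolumes d V)
    (K : ConvexBody 𝔼) {ε : ℝ} (hε : 0 < ε) :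
    (steinerPolynomial V K).eval ε = volume.real ((K : Set 𝔼) + closedBall 0 ε) := by
  have hsteiner := (hV K K.convex K.isCompact K.nonempty).1 ε hε
  rw [smul_unitClosedBall_of_nonneg hε.le] at hsteiner
  rw [Measure.real, hsteiner, steinerPolynomial, eval_finsetSum]
  simp only [eval_mul, eval_C, eval_pow, eval_X]

lemma coeff_zero_steinerPolynomial (hV : IsIntrinsicVolumes d V)
    (K : ConvexBody 𝔼) :
    (steinerPolynomial V K).coeff 0 = volume.real (K : Set 𝔼) := by
  rw [coeff_zero_eq_eval_zero]
  have hthickening : Tendsto (fun ε => volume.real (cthickening ε (K : Set 𝔼))) (𝓝[>] 0)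
      (𝓝 (volume.real (K : Set 𝔼))) :=
    (ENNReal.tendsto_toReal K.isCompact.measure_lt_top.ne).comp
      ((tendsto_measure_cthickening_of_isCompact K.isCompact).mono_left nhdsWithin_le_nhds)
  refine tendsto_nhds_unique
    (((steinerPolynomial V K).continuous.tendsto 0).mono_left nhdsWithin_le_nhds)
    (hthickening.congr' ?_)
  filter_upwards [self_mem_nhdsWithin] with ε hε
  rw [← K.isCompact.add_closedBall_zero (le_of_lt hε), hV.eval_steinerPolynomial K hε]

lemma steinerPolynomial_eq_of_forall_eval (hV : IsIntrinsicVolumes d V)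
    {K : ConvexBody 𝔼} {q : ℝ[X]}
    (h : ∀ ε > 0, volume.real ((K : Set 𝔼) + closedBall 0 ε) = q.eval ε) :
    steinerPolynomial V K = q :=
  eq_of_infinite_eval_eq _ _ ((Ioi_infinite (0 : ℝ)).mono fun ε hε =>
    (hV.eval_steinerPolynomial K hε).trans (h ε hε))

lemma steinerPolynomial_eq_of_isometry (hV : IsIntrinsicVolumes d V)
    {K L : ConvexBody 𝔼}
    (e : 𝔼 ≃ₗᵢ[ℝ] 𝔼) (hL : (L : Set 𝔼) = e '' K) :
    steinerPolynomial V L = steinerPolynomial V K := by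
  refine hV.steinerPolynomial_eq_of_forall_eval fun ε hε => ?_
  have himage : e '' K + closedBall 0 ε = e '' ((K : Set 𝔼) + closedBall 0 ε) := by
    rw [image_add, LinearIsometryEquiv.image_closedBall, map_zero]
  rw [hV.eval_steinerPolynomial K hε, hL, himage, LinearIsometryEquiv.image_eq_preimage_symm]
  exact congrArg ENNReal.toReal
    (e.symm.measurePreserving.measure_preimage_equiv (f := e.symm.toMeasurableEquiv) _)

lemma tendsto_volume_add (hV : IsIntrinsicVolumes d V)
    (K : ConvexBody 𝔼) {α : Type*} {l : Filter α} {δ : α → ℝ}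
    (hδ : Tendsto δ l (𝓝 0)) {Z : α → Set 𝔼} {s : ℝ} (hs : 0 < s)
    (hinner : ∀ a, closedBall 0 (s * (1 - δ a)) ⊆ Z a)
    (houter : ∀ a, Z a ⊆ closedBall 0 (s * (1 + δ a))) :
    Tendsto (fun a => volume.real ((K : Set 𝔼) + Z a)) l (𝓝 ((steinerPolynomial V K).eval s)) := by
  have hfinite (ρ : ℝ) : volume ((K : Set 𝔼) + closedBall 0 ρ) ≠ ⊤ :=
    (K.isCompact.add (isCompact_closedBall _ _)).measure_lt_top.ne
  refine tendsto_of_eval_sub_le_of_le_eval_add (δ := fun a => s * δ a)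
    (by simpa only [mul_zero] using hδ.const_mul s) ?_ ?_
  · filter_upwards [hδ.eventually (gt_mem_nhds one_pos)] with a ha
    rw [← mul_one_sub, hV.eval_steinerPolynomial K (mul_pos hs (sub_pos.2 ha))]
    exact measureReal_mono (add_subset_add_left (hinner a))
      (measure_ne_top_of_subset (add_subset_add_left (houter a)) (hfinite _))
  · filter_upwards [hδ.eventually (lt_mem_nhds (neg_one_lt_zero))] with a ha
    rw [← mul_one_add, hV.eval_steinerPolynomial K (mul_pos hs (by linarith))]
    exact measureReal_mono (add_subset_add_left (houter a)) (hfinite _)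

lemma continuous_coeff_steinerPolynomial (hV : IsIntrinsicVolumes d V) (i : ℕ) :
    Continuous fun K => (steinerPolynomial V K).coeff i := by
  refine continuous_iff_continuousAt.2 fun K => tendsto_coeff_of_tendsto_eval
    (natDegree_steinerPolynomial_le V) (natDegree_steinerPolynomial_le V K) (fun s hs => ?_) i
  have hfinite (L : ConvexBody 𝔼) (ρ : ℝ) :
      volume ((L : Set 𝔼) + closedBall 0 ρ) ≠ ⊤ :=
    (L.isCompact.add (isCompact_closedBall _ _)).measure_lt_top.ne
  have hparallel (K L : ConvexBody 𝔼) {ε : ℝ} (hε : 0 ≤ ε) :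
      (K : Set 𝔼) + closedBall 0 ε ⊆
        (L : Set 𝔼) + closedBall 0 (dist K L + ε) := by
    rw [← add_zero (0 : 𝔼), ← closedBall_add_closedBall dist_nonneg hε,
      ← add_assoc, add_zero]
    exact add_subset_add_right (subset_add_closedBall_dist K L)
  have hdist : Tendsto (fun L => dist K L) (𝓝 K) (𝓝 0) :=
    tendsto_iff_dist_tendsto_zero.1 tendsto_id |>.congr fun L => dist_comm _ _
  refine tendsto_of_eval_sub_le_of_le_eval_add hdist ?_ (.of_forall fun L => ?_)
  · filter_upwards [hdist.eventually (gt_mem_nhds hs)] with L hL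
    rw [hV.eval_steinerPolynomial K (sub_pos.2 hL), hV.eval_steinerPolynomial L hs]
    refine measureReal_mono ?_ (hfinite L s)
    simpa only [add_sub_cancel] using hparallel K L (sub_pos.2 hL).le
  · rw [hV.eval_steinerPolynomial K (by positivity), hV.eval_steinerPolynomial L hs, add_comm s,
      dist_comm]
    exact measureReal_mono (hparallel L K hs.le) (hfinite K _)

/- After replacing the ball by approximating zonotopes, the polynomial `p K + p K' - 2 p S` of the
body `K`, its reflection `K'` and its symmetral `S` has nonnegative coefficients; they survive in
the limit. -/
lemma coeff_steinerPolynomial_steinerSymm_le (hV : IsIntrinsicVolumes d V)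
    (K : ConvexBody 𝔼) {v : 𝔼} (hv : ‖v‖ = 1) (i : ℕ) :
    (steinerPolynomial V (steinerSymmBody v K)).coeff i ≤ (steinerPolynomial V K).coeff i := by
  let K' : ConvexBody 𝔼 := ⟨(ℝ ∙ v)ᗮ.reflection '' K,
    K.convex.is_linear_image (ℝ ∙ v)ᗮ.reflection.toLinearEquiv.toLinearMap.isLinear,
    K.isCompact.image (LinearIsometryEquiv.continuous _), K.nonempty.image _⟩
  choose F θ hθ using fun n : ℕ => exists_zonotope_approximating_closedBall
    (E := 𝔼) (Nat.one_div_pos_of_nat (α := ℝ) (n := n))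
  choose p hp hdeg heval using fun n => exists_polynomial_volume_add_zonotope (θ n) hv
    K.isCompact K.convex
  have htendsto : Tendsto (fun n => (p n).coeff i) atTop (𝓝 ((steinerPolynomial V K +
      steinerPolynomial V K' - C 2 * steinerPolynomial V (steinerSymmBody v K)).coeff i)) := by
    refine tendsto_coeff_of_tendsto_eval (n := d) (fun n => by simpa using hdeg n) ?_
      (fun s hs => ?_) i
    · have hdegree := natDegree_steinerPolynomial_le V
      simpa only [max_self] using natDegree_sub_le_of_le
        (natDegree_add_le_of_degree_le (hdegree K) (hdegree K'))
        ((natDegree_C_mul_le 2 _).trans (hdegree (steinerSymmBody v K)))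
    · have hvolume (L : ConvexBody 𝔼) :=
        hV.tendsto_volume_add L tendsto_one_div_add_atTop_nhds_zero_nat hs
          (fun n => (hθ n s hs.le).1) (fun n => (hθ n s hs.le).2)
      simp only [heval _ s hs.le, eval_sub, eval_add, eval_mul, eval_C]
      exact ((hvolume K).add (hvolume K')).sub ((hvolume (steinerSymmBody v K)).const_mul 2)
  have hnonneg := ge_of_tendsto' htendsto fun n => hp n i
  rw [hV.steinerPolynomial_eq_of_isometry (L := K') (ℝ ∙ v)ᗮ.reflection rfl, coeff_sub, coeff_add,
    coeff_C_mul] at hnonneg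
  linarith

end IsIntrinsicVolumes

end SteinerPolynomials

section IsoperimetricInequality

open Polynomial

local notation "𝔼" => EuclideanSpace ℝ (Fin d)

variable {V : ℕ → Set (EuclideanSpace ℝ (Fin d)) → ℝ}

lemma volume_real_closedBall_eq_mul_unitBallVol {ρ : ℝ} (hρ : 0 ≤ ρ) :
    volume.real (closedBall (0 : 𝔼) ρ) = ρ ^ d * unitBallVol d := by
  rw [Measure.addHaar_real_closedBall' volume _ hρ, finrank_euclideanSpace_fin]
  rfl

namespace IsIntrinsicVolumes

lemma isCompact_setOf_coeff_steinerPolynomial_le (hV : IsIntrinsicVolumes d V) (R m c : ℝ) (i : ℕ) :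
    IsCompact {L : ConvexBody 𝔼 | (L : Set 𝔼) ⊆ closedBall 0 R ∧ volume.real (L : Set 𝔼) = m ∧
      (steinerPolynomial V L).coeff i ≤ c} := by
  refine (isCompact_setOf_convexBody_subset (isCompact_closedBall 0 R)).inter_right
    (.inter ?_ (isClosed_le (hV.continuous_coeff_steinerPolynomial i) continuous_const))
  simp only [← hV.coeff_zero_steinerPolynomial]
  exact isClosed_eq (hV.continuous_coeff_steinerPolynomial 0) continuous_const

/- Among the convex bodies with the volume of `K` and `i`-th coefficient at most that of `K`, one
with the largest overlap with the ball of that volume is the ball itself: otherwise some Steiner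
symmetrization would increase the overlap. -/
lemma coeff_steinerPolynomial_closedBall_le (hV : IsIntrinsicVolumes d V) {K B : ConvexBody 𝔼}
    {ρ : ℝ} (hρ : 0 < ρ) (hB : (B : Set 𝔼) = closedBall 0 ρ)
    (hvol : volume.real (K : Set 𝔼) = volume.real (B : Set 𝔼)) (i : ℕ) :
    (steinerPolynomial V B).coeff i ≤ (steinerPolynomial V K).coeff i := by
  obtain ⟨R, hR⟩ := K.isCompact.isBounded.subset_closedBall 0
  let 𝒞 : Set (ConvexBody 𝔼) := {L | (L : Set 𝔼) ⊆ closedBall 0 R ∧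
    volume.real (L : Set 𝔼) = volume.real (K : Set 𝔼) ∧
    (steinerPolynomial V L).coeff i ≤ (steinerPolynomial V K).coeff i}
  have h𝒞 : IsCompact 𝒞 := hV.isCompact_setOf_coeff_steinerPolynomial_le R _ _ i
  have : IsFiniteMeasure (volume.restrict (closedBall (0 : 𝔼) ρ)) :=
    isFiniteMeasure_restrict.2 measure_closedBall_lt_top.ne
  obtain ⟨L, ⟨hLR, hLvol, hLi⟩, hLmax⟩ := UpperSemicontinuousOn.exists_isMaxOn (s := 𝒞)
    ⟨K, hR, rfl, le_rfl⟩ h𝒞 ((upperSemicontinuous_measure_convexBody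
      (volume.restrict (closedBall (0 : 𝔼) ρ))).upperSemicontinuousOn 𝒞)
  have hvolume_ne (ρ : ℝ) (hρ : 0 < ρ) : volume (closedBall (0 : 𝔼) ρ) ≠ 0 :=
    (measure_closedBall_pos volume _ hρ).ne'
  have hLB : volume (L : Set 𝔼) = volume (closedBall (0 : 𝔼) ρ) := by
    rw [← ENNReal.toReal_eq_toReal_iff' L.isCompact.measure_lt_top.ne measure_closedBall_lt_top.ne,
      ← hB]
    exact hLvol.trans hvol
  by_contra! hlt
  have hne : (L : Set 𝔼) ≠ closedBall 0 ρ := fun h =>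
    hlt.not_ge (SetLike.coe_injective (h.trans hB.symm) ▸ hLi)
  obtain ⟨v, hv, hgain⟩ := exists_volume_inter_lt_volume_steinerSymm_inter L.isCompact L.convex
    (interior_diff_nonempty_of_measure_eq L.isCompact L.convex (isCompact_closedBall 0 ρ)
      (convex_closedBall 0 ρ) (hvolume_ne ρ hρ) hLB hne)
    (interior_diff_nonempty_of_measure_eq (isCompact_closedBall 0 ρ) (convex_closedBall 0 ρ)
      L.isCompact L.convex (hLB ▸ hvolume_ne ρ hρ) hLB.symm hne.symm)
  have hmem : steinerSymmBody v L ∈ 𝒞 := ⟨steinerSymm_subset_closedBall v hLR,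
    (congrArg ENNReal.toReal (volume_steinerSymm hv L.isCompact L.convex)).trans hLvol,
    (hV.coeff_steinerPolynomial_steinerSymm_le L hv i).trans hLi⟩
  have hle := hLmax hmem
  simp only [mem_ofPred_eq, Measure.restrict_apply (ConvexBody.isClosed _).measurableSet] at hle
  exact hgain.not_ge hle

lemma coeff_steinerPolynomial_closedBall (hV : IsIntrinsicVolumes d V) {B : ConvexBody 𝔼} {ρ : ℝ}
    (hρ : 0 ≤ ρ) (hB : (B : Set 𝔼) = closedBall 0 ρ) {k : ℕ} (hk : k ≤ d) :
    (steinerPolynomial V B).coeff (d - k) = d.choose k * unitBallVol d * ρ ^ k := by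
  have hpoly : steinerPolynomial V B = C (unitBallVol d) * (X + C ρ) ^ d := by
    refine hV.steinerPolynomial_eq_of_forall_eval fun ε hε => ?_
    rw [hB, closedBall_add_closedBall hρ hε.le, add_zero,
      volume_real_closedBall_eq_mul_unitBallVol (by positivity)]
    simp only [eval_mul, eval_C, eval_pow, eval_add, eval_X]
    ring
  rw [hpoly, coeff_C_mul, coeff_X_add_C_pow, Nat.sub_sub_self hk, Nat.choose_symm hk]
  ring

lemma isoperimetric_inequality (hV : IsIntrinsicVolumes d V) (hd : d ≠ 0) (K : ConvexBody 𝔼)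
    (hK : 0 < volume.real (K : Set 𝔼)) {k : ℕ} (hk : k ≤ d) :
    (d.choose k : ℝ) * unitBallVol d ^ (1 - (k : ℝ) / d) / unitBallVol (d - k) *
      volume.real (K : Set 𝔼) ^ ((k : ℝ) / d) ≤ V k K := by
  have hω := unitBallVol_pos d
  set q := volume.real (K : Set 𝔼) / unitBallVol d with hq
  have hq0 : 0 < q := div_pos hK hω
  set ρ := q ^ (1 / (d : ℝ)) with hρ
  have hρ0 : 0 < ρ := Real.rpow_pos_of_pos hq0 _
  have hρpow (j : ℕ) : ρ ^ j = q ^ ((j : ℝ) / d) := by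
    rw [hρ, ← Real.rpow_natCast, ← Real.rpow_mul hq0.le, one_div_mul_eq_div]
  let B : ConvexBody 𝔼 := ⟨closedBall 0 ρ, convex_closedBall _ _, isCompact_closedBall _ _,
    nonempty_closedBall.2 hρ0.le⟩
  have hvol : volume.real (K : Set 𝔼) = volume.real (B : Set 𝔼) := by
    change _ = volume.real (closedBall (0 : 𝔼) ρ)
    rw [volume_real_closedBall_eq_mul_unitBallVol hρ0.le, hρpow,
      div_self (by exact_mod_cast hd), Real.rpow_one, hq, div_mul_cancel₀ _ hω.ne']
  have hcoeff := hV.coeff_steinerPolynomial_closedBall_le hρ0 rfl hvol (d - k)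
  rw [hV.coeff_steinerPolynomial_closedBall hρ0.le rfl hk, coeff_steinerPolynomial V K hk, hρpow,
    hq, Real.div_rpow hK.le hω.le] at hcoeff
  rw [div_mul_eq_mul_div, div_le_iff₀' (unitBallVol_pos _), Real.rpow_sub hω, Real.rpow_one]
  exact (by ring : _ = _).trans_le hcoeff

end IsIntrinsicVolumes

end IsoperimetricInequality

section ChebyshevInequality

variable {α : Type*} [MeasurableSpace α] {μ : Measure α} {f g κ : α → ENNReal}

lemma two_mul_lintegral_mul_lintegral (hf : Measurable f) (hg : Measurable g) :
    2 * ((∫⁻ x, f x ∂μ) * ∫⁻ x, g x ∂μ) = ∫⁻ x, ∫⁻ y, (f x * g y + f y * g x) ∂μ ∂μ := by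
  have hinner (x : α) :
      ∫⁻ y, (f x * g y + f y * g x) ∂μ = f x * ∫⁻ y, g y ∂μ + (∫⁻ y, f y ∂μ) * g x := by
    rw [lintegral_add_left (by fun_prop), lintegral_const_mul _ hg, lintegral_mul_const _ hf]
  simp only [hinner]
  rw [lintegral_add_left (by fun_prop), lintegral_mul_const _ hf, lintegral_const_mul _ hg, two_mul]

lemma ennreal_mul_add_mul_le_mul_add_mul {a b x y : ENNReal} (hab : a ≤ b) (hxy : x ≤ y) :
    a * y + b * x ≤ a * x + b * y := by
  obtain ⟨e, rfl⟩ := exists_add_of_le hab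
  obtain ⟨h, rfl⟩ := exists_add_of_le hxy
  calc a * (x + h) + (a + e) * x ≤ a * (x + h) + (a + e) * x + e * h := le_self_add
    _ = a * x + (a + e) * (x + h) := by ring

/- Chebyshev's integral inequality: the weights `f` favour large arguments more than `g` does. -/
lemma lintegral_mul_lintegral_mul_le_of_monotoneOn [LinearOrder α] (hf : Measurable f)
    (hg : Measurable g) (hκ : Measurable κ) {I : Set α} (hI : ∀ᵐ x ∂μ, x ∈ I)
    (hfg : ∀ x ∈ I, ∀ y ∈ I, x ≤ y → f x * g y ≤ f y * g x) (hmono : MonotoneOn κ I) :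
    (∫⁻ x, f x ∂μ) * ∫⁻ x, g x * κ x ∂μ ≤ (∫⁻ x, f x * κ x ∂μ) * ∫⁻ x, g x ∂μ := by
  have hpointwise : ∀ x ∈ I, ∀ y ∈ I,
      f x * (g y * κ y) + f y * (g x * κ x) ≤ f x * κ x * g y + f y * κ y * g x := by
    intro x hx y hy
    wlog hxy : x ≤ y generalizing x y
    · simpa only [add_comm] using this y hy x hx (le_of_not_ge hxy)
    calc f x * (g y * κ y) + f y * (g x * κ x) = f x * g y * κ y + f y * g x * κ x := by ring
      _ ≤ f x * g y * κ x + f y * g x * κ y :=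
        ennreal_mul_add_mul_le_mul_add_mul (hfg x hx y hy hxy) (hmono hx hy hxy)
      _ = f x * κ x * g y + f y * κ y * g x := by ring
  refine (ENNReal.mul_le_mul_iff_right two_ne_zero (by norm_num)).1 ?_
  have hleft := two_mul_lintegral_mul_lintegral (μ := μ) hf (hg.mul hκ)
  have hright := two_mul_lintegral_mul_lintegral (μ := μ) (hf.mul hκ) hg
  simp only [Pi.mul_apply] at hleft hright
  rw [hleft, hright]
  refine lintegral_mono_ae (hI.mono fun x hx => lintegral_mono_ae (hI.mono fun y hy => ?_))
  exact hpointwise x hx y hy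

end ChebyshevInequality

section SlopeCoordinates

section

variable {E : Type*} [NormedAddCommGroup E] [NormedSpace ℝ E] [FiniteDimensional ℝ E]
  [MeasurableSpace E] [BorelSpace E]

lemma setLIntegral_enorm_smul (μ : Measure E) [μ.IsAddHaarMeasure] {t : ℝ} (ht : 0 < t)
    (S : Set E) : ∫⁻ w in t • S, ‖w‖ₑ ∂μ =
      ENNReal.ofReal (t ^ (Module.finrank ℝ E + 1)) * ∫⁻ w in S, ‖w‖ₑ ∂μ := by
  have hrestrict := (measurableEmbedding_const_smul₀ (α := E) ht.ne').restrict_map μ (t • S)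
  rw [preimage_smul₀ ht.ne', inv_smul_smul₀ ht.ne', Measure.map_addHaar_smul μ ht.ne',
    Measure.restrict_smul] at hrestrict
  have hscale : ENNReal.ofReal t * ∫⁻ w in S, ‖w‖ₑ ∂μ =
      ENNReal.ofReal |(t ^ Module.finrank ℝ E)⁻¹| * ∫⁻ w in t • S, ‖w‖ₑ ∂μ := by
    rw [← smul_eq_mul (ENNReal.ofReal |_|), ← lintegral_smul_measure, hrestrict,
      lintegral_map (by fun_prop) (by fun_prop), ← lintegral_const_mul _ (by fun_prop)]
    simp only [enorm_smul, Real.enorm_eq_ofReal ht.le]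
  rw [pow_succ, ENNReal.ofReal_mul (by positivity), mul_assoc, hscale, ← mul_assoc,
    ← ENNReal.ofReal_mul (by positivity), abs_of_pos (by positivity),
    mul_inv_cancel₀ (by positivity), ENNReal.ofReal_one, one_mul]

end

variable {E : Type*} [NormedAddCommGroup E] [InnerProductSpace ℝ E] {v : E}

/-- The points of `X` of slope `τ` over the hyperplane orthogonal to `v`, parametrized by their
projection to that hyperplane. -/
def slopeFiber (v : E) (X : Set E) (τ : ℝ) : Set (ℝ ∙ v)ᗮ := {w | (τ * ‖w‖) • v + (w : E) ∈ X}

lemma slopeFiber_inter (v : E) (X Y : Set E) (τ : ℝ) :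
    slopeFiber v (X ∩ Y) τ = slopeFiber v X τ ∩ slopeFiber v Y τ := rfl

lemma slopeFiber_convexCone_mono {C : ConvexCone ℝ E} (hv : v ∈ C) : Monotone (slopeFiber v C) := by
  intro τ σ hτσ w hw
  rcases (mul_le_mul_of_nonneg_right hτσ (norm_nonneg w)).eq_or_lt with h | h
  · rwa [slopeFiber, mem_ofPred_eq, ← h]
  · have hadd := C.add_mem (C.smul_mem (sub_pos.2 h) hv) hw
    rwa [← add_assoc, ← add_smul, sub_add_cancel] at hadd

lemma smul_slopeFiber_convexCone (C : ConvexCone ℝ E) (τ : ℝ) {t : ℝ} (ht : 0 < t) :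
    t • slopeFiber v C τ = slopeFiber v C τ := by
  ext w
  have hpoint : (τ * ‖t⁻¹ • w‖) • v + ((t⁻¹ • w : (ℝ ∙ v)ᗮ) : E) =
      t⁻¹ • ((τ * ‖w‖) • v + (w : E)) := by
    rw [norm_smul, Real.norm_of_nonneg (by positivity), Submodule.coe_smul]
    module
  rw [mem_smul_set_iff_inv_smul_mem₀ ht.ne', slopeFiber, mem_ofPred_eq, hpoint]
  exact C.smul_mem_iff (inv_pos.2 ht)

/- For fixed `w ≠ 0` the fiber over `w` is `τ ↦ τ * ‖w‖` applied to the set of slopes. -/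
lemma volume_lineFiber_inter_Ioi_eq {X : Set E} {w : (ℝ ∙ v)ᗮ} (hw : w ≠ 0) :
    volume (lineFiber v X w ∩ Ioi 0) = ‖w‖ₑ * volume ({τ | w ∈ slopeFiber v X τ} ∩ Ioi 0) := by
  have hpre : (‖w‖ * ·) ⁻¹' (lineFiber v X w ∩ Ioi 0) = {τ | w ∈ slopeFiber v X τ} ∩ Ioi 0 := by
    ext τ
    simp [lineFiber, slopeFiber, mul_comm τ, hw]
  rw [← hpre, Real.volume_preimage_mul_left (norm_ne_zero_iff.2 hw), ← mul_assoc,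
    abs_of_nonneg (by positivity), ← ofReal_norm, ← ENNReal.ofReal_mul (norm_nonneg _),
    mul_inv_cancel₀ (norm_ne_zero_iff.2 hw), ENNReal.ofReal_one, one_mul]

variable [FiniteDimensional ℝ E] [MeasurableSpace E] [BorelSpace E]

lemma measurableSet_setOf_mem_slopeFiber {X : Set E} (hX : MeasurableSet X) :
    MeasurableSet {q : ℝ × (ℝ ∙ v)ᗮ | q.2 ∈ slopeFiber v X q.1} :=
  (by fun_prop : Measurable fun q : ℝ × (ℝ ∙ v)ᗮ => (q.1 * ‖q.2‖) • v + (q.2 : E)) hX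

lemma measurableSet_slopeFiber {X : Set E} (hX : MeasurableSet X) (τ : ℝ) :
    MeasurableSet (slopeFiber v X τ) :=
  (by fun_prop : Measurable fun w : (ℝ ∙ v)ᗮ => (τ * ‖w‖) • v + (w : E)) hX

lemma volume_inter_inner_pos_eq_lintegral_slopeFiber (hv : ‖v‖ = 1) [Nontrivial (ℝ ∙ v)ᗮ]
    {X : Set E} (hX : MeasurableSet X) :
    volume (X ∩ {z | 0 < ⟪v, z⟫}) = ∫⁻ τ in Ioi (0 : ℝ), ∫⁻ w in slopeFiber v X τ, ‖w‖ₑ := by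
  have hH : MeasurableSet {z : E | 0 < ⟪v, z⟫} :=
    measurableSet_lt measurable_const (by fun_prop)
  have hfiber (w : (ℝ ∙ v)ᗮ) :
      lineFiber v (X ∩ {z | 0 < ⟪v, z⟫}) w = lineFiber v X w ∩ Ioi 0 := by
    ext t
    simp only [lineFiber, mem_inter_iff, mem_ofPred_eq, inner_smul_add_orthogonal hv, mem_Ioi]
  calc volume (X ∩ {z | 0 < ⟪v, z⟫})
      = ∫⁻ w : (ℝ ∙ v)ᗮ, ‖w‖ₑ * volume ({τ | w ∈ slopeFiber v X τ} ∩ Ioi 0) := by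
        rw [volume_eq_lintegral_lineFiber hv (hX.inter hH)]
        refine lintegral_congr_ae ?_
        filter_upwards [Measure.ae_ne volume 0] with w hw
        rw [hfiber, volume_lineFiber_inter_Ioi_eq hw]
    _ = ∫⁻ w : (ℝ ∙ v)ᗮ, ∫⁻ τ in Ioi (0 : ℝ),
          {τ | w ∈ slopeFiber v X τ}.indicator (fun _ => ‖w‖ₑ) τ := by
        refine lintegral_congr fun w => ?_
        have hw : MeasurableSet {τ | w ∈ slopeFiber v X τ} :=
          measurable_prodMk_right (measurableSet_setOf_mem_slopeFiber hX)
        rw [lintegral_indicator_const hw, Measure.restrict_apply hw]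
    _ = ∫⁻ τ in Ioi (0 : ℝ), ∫⁻ w in slopeFiber v X τ, ‖w‖ₑ := by
        have hm : Measurable (Function.uncurry fun (w : (ℝ ∙ v)ᗮ) (τ : ℝ) =>
            {τ | w ∈ slopeFiber v X τ}.indicator (fun _ => ‖w‖ₑ) τ) :=
          Measurable.indicator (by fun_prop)
            (measurable_swap (measurableSet_setOf_mem_slopeFiber (v := v) hX))
        rw [lintegral_lintegral_swap hm.aemeasurable]
        exact lintegral_congr fun τ => lintegral_indicator (measurableSet_slopeFiber hX τ) _

/-- The moment of the slice of slope `τ` of the part of `C` in the unit cylinder around the axis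
`v`. For a cone `C` it is the density of `C` in the direction of slope `τ`. -/
noncomputable def slopeDensity (v : E) (C : Set E) (τ : ℝ) : ENNReal :=
  ∫⁻ w in slopeFiber v C τ ∩ closedBall 0 1, ‖w‖ₑ

lemma measurable_slopeDensity {C : Set E} (hC : MeasurableSet C) :
    Measurable (slopeDensity v C) := by
  have hball : MeasurableSet {q : ℝ × (ℝ ∙ v)ᗮ | q.2 ∈ closedBall 0 1} :=
    measurable_snd measurableSet_closedBall
  have hm := (Measurable.indicator (f := fun q : ℝ × (ℝ ∙ v)ᗮ => ‖q.2‖ₑ) (by fun_prop)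
    ((measurableSet_setOf_mem_slopeFiber hC).inter hball)).lintegral_prod_right' (ν := volume)
  convert hm using 2 with τ
  rw [slopeDensity, 
    ← lintegral_indicator ((measurableSet_slopeFiber hC τ).inter measurableSet_closedBall)]
  rfl

lemma slopeDensity_top (v : E) (τ : ℝ) :
    slopeDensity v ((⊤ : ConvexCone ℝ E) : Set E) τ =
      slopeDensity v ((⊤ : ConvexCone ℝ E) : Set E) 0 := by
  simp [slopeDensity, slopeFiber]

lemma volume_inter_convexCone_inter_inner_pos (hv : ‖v‖ = 1) [Nontrivial (ℝ ∙ v)ᗮ] {X : Set E}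
    (hX : MeasurableSet X) {C : ConvexCone ℝ E} (hC : MeasurableSet (C : Set E)) {ρ : ℝ → ℝ}
    (hρ : ∀ τ, 0 < τ → 0 < ρ τ)
    (hXρ : ∀ τ, 0 < τ → slopeFiber v X τ = closedBall 0 (ρ τ)) :
    volume (X ∩ C ∩ {z | 0 < ⟪v, z⟫}) = ∫⁻ τ in Ioi (0 : ℝ),
      ENNReal.ofReal (ρ τ ^ (Module.finrank ℝ (ℝ ∙ v)ᗮ + 1)) * slopeDensity v C τ := by
  rw [volume_inter_inner_pos_eq_lintegral_slopeFiber hv (hX.inter hC)]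
  refine setLIntegral_congr_fun measurableSet_Ioi fun τ hτ => ?_
  have hfiber : slopeFiber v (X ∩ C) τ = ρ τ • (slopeFiber v C τ ∩ closedBall 0 1) := by
    rw [slopeFiber_inter, hXρ τ hτ, smul_set_inter₀ (hρ τ hτ).ne',
      smul_slopeFiber_convexCone C τ (hρ τ hτ), smul_unitClosedBall_of_nonneg (hρ τ hτ).le,
      inter_comm]
  rw [hfiber, setLIntegral_enorm_smul volume (hρ τ hτ), slopeDensity]

/- The cone takes up a larger share of `X` than of `B`, since its density increases with the slope
and, by `hmono`, so does the radius of `X` relative to that of `B`. -/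
lemma volume_mul_volume_inter_convexCone_le (hv : ‖v‖ = 1) [Nontrivial (ℝ ∙ v)ᗮ] {X B : Set E}
    (hX : MeasurableSet X) (hB : MeasurableSet B) {C : ConvexCone ℝ E}
    (hC : MeasurableSet (C : Set E)) (hvC : v ∈ C) {ρ σ : ℝ → ℝ} (hρm : Measurable ρ)
    (hσm : Measurable σ) (hρ : ∀ τ, 0 < τ → 0 < ρ τ) (hσ : ∀ τ, 0 < τ → 0 < σ τ)
    (hXρ : ∀ τ, 0 < τ → slopeFiber v X τ = closedBall 0 (ρ τ))
    (hBσ : ∀ τ, 0 < τ → slopeFiber v B τ = closedBall 0 (σ τ))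
    (hmono : ∀ τ, 0 < τ → ∀ τ', τ ≤ τ' → ρ τ * σ τ' ≤ ρ τ' * σ τ) :
    volume (X ∩ {z | 0 < ⟪v, z⟫}) * volume (B ∩ C ∩ {z | 0 < ⟪v, z⟫}) ≤
      volume (X ∩ C ∩ {z | 0 < ⟪v, z⟫}) * volume (B ∩ {z | 0 < ⟪v, z⟫}) := by
  have hXtop := volume_inter_convexCone_inter_inner_pos hv hX (C := ⊤) .univ hρ hXρ
  have hBtop := volume_inter_convexCone_inter_inner_pos hv hB (C := ⊤) .univ hσ hBσ
  simp only [slopeDensity_top] at hXtop hBtop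
  rw [lintegral_mul_const _ (by fun_prop), ConvexCone.coe_top, inter_univ] at hXtop hBtop
  rw [hXtop, hBtop, volume_inter_convexCone_inter_inner_pos hv hX hC hρ hXρ,
    volume_inter_convexCone_inter_inner_pos hv hB hC hσ hBσ, mul_right_comm, ← mul_assoc]
  refine mul_le_mul_left (lintegral_mul_lintegral_mul_le_of_monotoneOn (by fun_prop) (by fun_prop)
    (measurable_slopeDensity hC) (ae_restrict_mem measurableSet_Ioi) ?_ ?_) _
  · intro τ (hτ : 0 < τ) τ' (hτ' : 0 < τ') hle
    have := hρ τ hτ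
    have := hρ τ' hτ'
    rw [← ENNReal.ofReal_mul (by positivity), ← ENNReal.ofReal_mul (by positivity), ← mul_pow,
      ← mul_pow]
    have := hσ τ' hτ'
    exact ENNReal.ofReal_le_ofReal (pow_le_pow_left₀ (by positivity) (hmono τ hτ τ' hle) _)
  · intro τ _ τ' _ hle
    exact lintegral_mono_set (inter_subset_inter_left _ (slopeFiber_convexCone_mono hvC hle))

end SlopeCoordinates

section HalfSpaces

variable {E : Type*} [NormedAddCommGroup E] [InnerProductSpace ℝ E] [FiniteDimensional ℝ E]
  [MeasurableSpace E] [BorelSpace E] {a : E}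

lemma volume_setOf_inner_eq_zero (ha : a ≠ 0) : volume {z : E | ⟪a, z⟫ = 0} = 0 := by
  have hset : {z : E | ⟪a, z⟫ = 0} = (ℝ ∙ a)ᗮ :=
    Set.ext fun z => Submodule.mem_orthogonal_singleton_iff_inner_right.symm
  rw [hset]
  refine Measure.addHaar_submodule _ _ fun htop => ha ?_
  simpa [Submodule.orthogonal_eq_top_iff] using htop

lemma volume_inter_inner_pos_eq_of_forall_inner_nonneg (ha : a ≠ 0) {Y : Set E}
    (hY : ∀ z ∈ Y, 0 ≤ ⟪a, z⟫) : volume (Y ∩ {z | 0 < ⟪a, z⟫}) = volume Y := by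
  refine (measure_mono inter_subset_left).antisymm ?_
  calc volume Y ≤ volume (Y ∩ {z | 0 < ⟪a, z⟫} ∪ {z | ⟪a, z⟫ = 0}) :=
        measure_mono fun z hz => (hY z hz).lt_or_eq.imp (⟨hz, ·⟩) Eq.symm
    _ ≤ volume (Y ∩ {z | 0 < ⟪a, z⟫}) := by
        simpa [volume_setOf_inner_eq_zero ha] using measure_union_le (μ := volume)
          (Y ∩ {z | 0 < ⟪a, z⟫}) {z | ⟪a, z⟫ = 0}

lemma volume_eq_two_mul_volume_inter_inner_pos (ha : a ≠ 0) {Y : Set E} (hY : -Y = Y) :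
    volume Y = 2 * volume (Y ∩ {z | 0 < ⟪a, z⟫}) := by
  have hneg : Y \ {z | 0 < ⟪a, z⟫} = -(Y ∩ {z | 0 ≤ ⟪a, z⟫}) := by
    ext z
    simp [inter_neg, hY]
  have hpos : Y ∩ {z | 0 < ⟪a, z⟫} = Y ∩ {z | 0 ≤ ⟪a, z⟫} ∩ {z | 0 < ⟪a, z⟫} := by
    ext z
    simp +contextual [le_of_lt]
  rw [← measure_inter_add_sdiff Y (measurableSet_lt measurable_const (by fun_prop) :
    MeasurableSet {z | 0 < ⟪a, z⟫}), hneg, Measure.measure_neg, two_mul, hpos,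
    volume_inter_inner_pos_eq_of_forall_inner_nonneg ha fun z hz => hz.2]

end HalfSpaces

section Spindles

variable {E : Type*} [NormedAddCommGroup E] [InnerProductSpace ℝ E] {v : E} {s R : ℝ}

/-- The spindle with apices `±R v`, where `v` is a unit vector: the intersection of all balls of
radius `√(s² + R²)` that contain both apices. The centers at distance `s` from the origin and
orthogonal to `v` already cut it out, which is what the inequality expresses. -/
def spindle (s R : ℝ) (v : E) : Set E := {z | ‖z‖ ^ 2 + 2 * s * ‖z - ⟪v, z⟫ • v‖ ≤ R ^ 2}

lemma isClosed_spindle (s R : ℝ) (v : E) : IsClosed (spindle s R v) :=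
  isClosed_le (by fun_prop) continuous_const

lemma neg_spindle (s R : ℝ) (v : E) : -spindle s R v = spindle s R v := by
  ext z
  simp [spindle, ← norm_neg (z - ⟪v, z⟫ • v), neg_add_eq_sub]

lemma spindle_zero (hR : 0 ≤ R) (v : E) : spindle 0 R v = closedBall 0 R := by
  ext z
  simp [spindle, pow_le_pow_iff_left₀ (norm_nonneg z) hR two_ne_zero]

lemma smul_add_mem_spindle_iff (hv : ‖v‖ = 1) {t : ℝ} {w : (ℝ ∙ v)ᗮ} :
    t • v + (w : E) ∈ spindle s R v ↔ t ^ 2 + ‖w‖ ^ 2 + 2 * s * ‖w‖ ≤ R ^ 2 := by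
  rw [spindle, mem_ofPred_eq, inner_smul_add_orthogonal hv, norm_sq_smul_add_orthogonal hv,
    add_sub_cancel_left, Submodule.coe_norm]

/-- The radius of the slice of slope `τ` of a spindle: the positive root `m` of
`(1 + τ²) m² + 2 s m = R²`, with the numerator rationalized. -/
noncomputable def spindleRadius (s R τ : ℝ) : ℝ := R ^ 2 / (s + √(s ^ 2 + (1 + τ ^ 2) * R ^ 2))

lemma spindleRadius_pos (hs : 0 ≤ s) (hR : 0 < R) (τ : ℝ) : 0 < spindleRadius s R τ := by
  unfold spindleRadius
  positivity

lemma measurable_spindleRadius (s R : ℝ) : Measurable (spindleRadius s R) := by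
  unfold spindleRadius
  fun_prop

lemma le_spindleRadius_iff (hs : 0 ≤ s) (hR : 0 < R) (τ : ℝ) {m : ℝ} (hm : 0 ≤ m) :
    m ≤ spindleRadius s R τ ↔ (τ * m) ^ 2 + m ^ 2 + 2 * s * m ≤ R ^ 2 := by
  set q := √(s ^ 2 + (1 + τ ^ 2) * R ^ 2)
  have hq2 : q ^ 2 = s ^ 2 + (1 + τ ^ 2) * R ^ 2 := Real.sq_sqrt (by positivity)
  have hsq : s ≤ q := Real.le_sqrt_of_sq_le (by nlinarith [sq_nonneg (τ * R), sq_nonneg R])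
  have hcofactor : 0 < (q - s) * m + R ^ 2 := by
    have := mul_nonneg (sub_nonneg.2 hsq) hm
    positivity
  have hfactor : R ^ 2 * (R ^ 2 - ((τ * m) ^ 2 + m ^ 2 + 2 * s * m)) =
      (R ^ 2 - m * (s + q)) * ((q - s) * m + R ^ 2) := by
    linear_combination m ^ 2 * hq2
  rw [spindleRadius, le_div_iff₀ (by positivity), ← sub_nonneg,
    ← mul_nonneg_iff_of_pos_right hcofactor, ← hfactor, mul_nonneg_iff_of_pos_left (by positivity),
    sub_nonneg]

lemma slopeFiber_spindle (hv : ‖v‖ = 1) (hs : 0 ≤ s) (hR : 0 < R) (τ : ℝ) :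
    slopeFiber v (spindle s R v) τ = closedBall 0 (spindleRadius s R τ) := by
  ext w
  rw [mem_closedBall_zero_iff, le_spindleRadius_iff hs hR τ (norm_nonneg w), slopeFiber,
    mem_ofPred_eq, smul_add_mem_spindle_iff hv]

lemma spindleRadius_mul_spindleRadius_zero_le (hs : 0 ≤ s) (hR : 0 < R) {τ τ' : ℝ} (hτ : 0 < τ)
    (hle : τ ≤ τ') :
    spindleRadius s R τ * spindleRadius 0 R τ' ≤ spindleRadius s R τ' * spindleRadius 0 R τ := by
  have hsq : (1 + τ ^ 2) * R ^ 2 ≤ (1 + τ' ^ 2) * R ^ 2 := by gcongr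
  have hsqrt : √((1 + τ ^ 2) * R ^ 2) * √(s ^ 2 + (1 + τ' ^ 2) * R ^ 2) ≤
      √((1 + τ' ^ 2) * R ^ 2) * √(s ^ 2 + (1 + τ ^ 2) * R ^ 2) := by
    rw [← Real.sqrt_mul (by positivity), ← Real.sqrt_mul (by positivity)]
    refine Real.sqrt_le_sqrt ?_
    linarith [mul_le_mul_of_nonneg_right hsq (sq_nonneg s)]
  simp only [spindleRadius, zero_pow two_ne_zero, zero_add]
  rw [div_mul_div_comm, div_mul_div_comm]
  refine div_le_div_of_nonneg_left (by positivity) (by positivity) ?_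
  linarith [mul_le_mul_of_nonneg_left (Real.sqrt_le_sqrt hsq) hs]

variable [FiniteDimensional ℝ E] [MeasurableSpace E] [BorelSpace E]

lemma volume_spindle_pos (hR : 0 < R) (s : ℝ) (v : E) : 0 < volume (spindle s R v) := by
  have hopen : IsOpen {z : E | ‖z‖ ^ 2 + 2 * s * ‖z - ⟪v, z⟫ • v‖ < R ^ 2} :=
    isOpen_lt (by fun_prop) continuous_const
  exact (hopen.measure_pos volume ⟨0, by simp [hR]⟩).trans_le
    (measure_mono fun z hz => le_of_lt (mem_ofPred_eq ▸ hz))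

lemma volume_spindle_eq_of_norm_eq (s R : ℝ) {v v' : E} (h : ‖v‖ = ‖v'‖) :
    volume (spindle s R v) = volume (spindle s R v') := by
  let F : E ≃ₗᵢ[ℝ] E := (ℝ ∙ (v - v'))ᗮ.reflection
  have hF : F v = v' := Submodule.reflection_sub h
  rw [← F.measurePreserving.measure_preimage (isClosed_spindle s R v').nullMeasurableSet]
  congr 1
  ext z
  rw [mem_preimage, spindle, spindle, mem_ofPred_eq, mem_ofPred_eq, ← hF, F.inner_map_map,
    ← map_smul, ← map_sub, F.norm_map, F.norm_map]

lemma volume_spindle_mul_volume_closedBall_inter_le (hv : ‖v‖ = 1) [Nontrivial (ℝ ∙ v)ᗮ]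
    (hs : 0 ≤ s) (hR : 0 < R) {C : ConvexCone ℝ E} (hC : MeasurableSet (C : Set E)) (hvC : v ∈ C)
    (hCnonneg : ∀ z ∈ C, 0 ≤ ⟪v, z⟫) :
    volume (spindle s R v) * volume (closedBall (0 : E) R ∩ C) ≤
      volume (spindle s R v ∩ C) * volume (closedBall (0 : E) R) := by
  have hv0 : v ≠ 0 := norm_ne_zero_iff.1 (hv ▸ one_ne_zero)
  have hcone (s : ℝ) : volume (spindle s R v ∩ C) =
      volume (spindle s R v ∩ C ∩ {z | 0 < ⟪v, z⟫}) :=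
    (volume_inter_inner_pos_eq_of_forall_inner_nonneg hv0 fun z hz => hCnonneg z hz.2).symm
  rw [← spindle_zero hR.le v, hcone, hcone,
    volume_eq_two_mul_volume_inter_inner_pos hv0 (neg_spindle s R v),
    volume_eq_two_mul_volume_inter_inner_pos hv0 (neg_spindle 0 R v), mul_assoc, mul_left_comm _ 2]
  exact mul_le_mul_right (volume_mul_volume_inter_convexCone_le hv
    (isClosed_spindle s R v).measurableSet (isClosed_spindle 0 R v).measurableSet hC hvC
    (measurable_spindleRadius s R) (measurable_spindleRadius 0 R)
    (fun τ _ => spindleRadius_pos hs hR τ)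
    (fun τ _ => spindleRadius_pos le_rfl hR τ) (fun τ _ => slopeFiber_spindle hv hs hR τ)
    (fun τ _ => slopeFiber_spindle hv le_rfl hR τ)
    fun τ hτ τ' => spindleRadius_mul_spindleRadius_zero_le hs hR hτ) _

end Spindles

section SpindlesAndBalls

variable {E : Type*} [NormedAddCommGroup E] [InnerProductSpace ℝ E] {s R r : ℝ} {v : E}

lemma exists_norm_eq_one_inner_eq_neg_norm [Nontrivial E] (w : E) :
    ∃ e : E, ‖e‖ = 1 ∧ ⟪w, e⟫ = -‖w‖ := by
  rcases eq_or_ne w 0 with rfl | hw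
  · obtain ⟨e, he⟩ := exists_norm_eq E zero_le_one
    exact ⟨e, he, by simp⟩
  · refine ⟨-(‖w‖⁻¹ • w), (norm_neg _).trans (norm_smul_inv_norm (𝕜 := ℝ) hw), ?_⟩
    rw [inner_neg_right, inner_smul_right, real_inner_self_eq_norm_sq]
    field [norm_ne_zero_iff.2 hw]

lemma mem_spindle_of_forall_norm_sub_le [Nontrivial (ℝ ∙ v)ᗮ] (hv : ‖v‖ = 1)
    (hsr : s ^ 2 + R ^ 2 = r ^ 2) {z : E}
    (hz : ∀ e : (ℝ ∙ v)ᗮ, ‖e‖ = 1 → ‖z - s • (e : E)‖ ≤ r) : z ∈ spindle s R v := by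
  obtain ⟨t, w, rfl⟩ := exists_eq_smul_add_orthogonal v z
  obtain ⟨e, he, hwe⟩ := exists_norm_eq_one_inner_eq_neg_norm w
  have hsq := pow_le_pow_left₀ (norm_nonneg _) (hz e he) 2
  rw [add_sub_assoc, ← Submodule.coe_smul, ← Submodule.coe_sub, norm_sq_smul_add_orthogonal hv,
    norm_sub_sq_real, inner_smul_right, hwe, norm_smul, he, mul_one, Real.norm_eq_abs,
    sq_abs] at hsq
  rw [smul_add_mem_spindle_iff hv]
  linarith

lemma norm_sub_le_of_mem_spindle (hv : ‖v‖ = 1) (hR : 0 ≤ R) (hr : 0 ≤ r)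
    (hsr : s ^ 2 + R ^ 2 = r ^ 2) {y z : E} (hz : z ∈ spindle s R v) (hvz : 0 ≤ ⟪v, z⟫)
    (hy : ‖y‖ ≤ s) (hRy : ‖R • v - y‖ ≤ r) : ‖z - y‖ ≤ r := by
  obtain ⟨t, w, rfl⟩ := exists_eq_smul_add_orthogonal v z
  rw [smul_add_mem_spindle_iff hv] at hz
  rw [inner_smul_add_orthogonal hv] at hvz
  have hs : 0 ≤ s := (norm_nonneg y).trans hy
  have htR : t ≤ R := abs_le_of_sq_le_sq' (by nlinarith [norm_nonneg w, sq_nonneg ‖w‖]) hR |>.2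
  have hwy : -(s * ‖w‖) ≤ ⟪(w : E), y⟫ := by
    have hcs := neg_le_of_abs_le (abs_real_inner_le_norm (w : E) y)
    rw [Submodule.coe_norm]
    nlinarith [norm_nonneg (w : E)]
  have hys : ‖y‖ ^ 2 ≤ s ^ 2 := pow_le_pow_left₀ (norm_nonneg y) hy 2
  have hapex : ‖y‖ ^ 2 - 2 * R * ⟪v, y⟫ ≤ s ^ 2 := by
    have hsq := pow_le_pow_left₀ (norm_nonneg _) hRy 2
    rw [norm_sub_sq_real, inner_smul_left, norm_smul, hv, mul_one, Real.norm_eq_abs, sq_abs,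
      ← hsr] at hsq
    simp only [conj_trivial] at hsq
    linarith
  -- The bound is affine in `⟪v, z⟫`; it is checked at the endpoints `0` and `R`.
  have haxis : ‖y‖ ^ 2 - 2 * t * ⟪v, y⟫ ≤ s ^ 2 := by
    rcases le_total 0 ⟪v, y⟫ with h | h <;> nlinarith
  refine abs_le_of_sq_le_sq' ?_ hr |>.2
  rw [norm_sub_sq_real, norm_sq_smul_add_orthogonal hv, inner_add_left, inner_smul_left, ← hsr]
  simp only [conj_trivial]
  linarith

end SpindlesAndBalls

section NormalFans

lemma norm_inv_smul_eq_one {E : Type*} [SeminormedAddCommGroup E] [NormedSpace ℝ E] {R : ℝ}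
    (hR : 0 < R) {x : E} (hx : ‖x‖ = R) : ‖R⁻¹ • x‖ = 1 := by
  rw [norm_smul, hx, norm_inv, Real.norm_of_nonneg hR.le, inv_mul_cancel₀ hR.ne']

variable {E : Type*} [NormedAddCommGroup E] [InnerProductSpace ℝ E] {Q : Finset E}

/-- The outer normal cone at `p` of the polytope with vertices in `Q`: the directions in which no
point of `Q` is farther than `p`. -/
def normalCone (Q : Finset E) (p : E) : ConvexCone ℝ E where
  carrier := {u | ∀ q ∈ Q, ⟪q, u⟫ ≤ ⟪p, u⟫}
  smul_mem' c hc u hu q hq := by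
    rw [inner_smul_right, inner_smul_right]
    exact mul_le_mul_of_nonneg_left (hu q hq) hc.le
  add_mem' u hu u' hu' q hq := by
    rw [inner_add_right, inner_add_right]
    exact add_le_add (hu q hq) (hu' q hq)

lemma isClosed_normalCone (Q : Finset E) (p : E) : IsClosed (normalCone Q p : Set E) := by
  have hset : (normalCone Q p : Set E) = ⋂ q ∈ Q, {u | ⟪q, u⟫ ≤ ⟪p, u⟫} := by
    ext u
    simp [normalCone]
  rw [hset]
  exact isClosed_biInter fun q _ => isClosed_le (by fun_prop) (by fun_prop)

lemma self_mem_normalCone {p : E} (h : ∀ q ∈ Q, ‖q‖ ≤ ‖p‖) : p ∈ normalCone Q p := fun q hq =>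
  calc ⟪q, p⟫ ≤ ‖q‖ * ‖p‖ := real_inner_le_norm q p
    _ ≤ ‖p‖ * ‖p‖ := mul_le_mul_of_nonneg_right (h q hq) (norm_nonneg p)
    _ = ⟪p, p⟫ := (real_inner_self_eq_norm_mul_norm p).symm

lemma iUnion_normalCone_eq_univ (hQ : Q.Nonempty) : ⋃ p ∈ Q, (normalCone Q p : Set E) = univ :=
  eq_univ_of_forall fun u =>
    have ⟨_, hp, hmax⟩ := Q.exists_max_image (fun q => ⟪q, u⟫) hQ
    mem_biUnion hp hmax

lemma exists_inner_nonneg_of_zero_mem_convexHull {T : Set E} (hT : (0 : E) ∈ convexHull ℝ T)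
    (u : E) : ∃ p ∈ T, 0 ≤ ⟪p, u⟫ := by
  have hlin : ConvexOn ℝ univ fun p : E => ⟪p, u⟫ := ((innerₗ E).flip u).convexOn convex_univ
  obtain ⟨p, hp, hle⟩ := hlin.exists_ge_of_mem_convexHull (subset_univ T) hT
  exact ⟨p, hp, by simpa using hle⟩

lemma inner_nonneg_of_mem_normalCone (hQ : (0 : E) ∈ convexHull ℝ (Q : Set E)) {p u : E}
    (hu : u ∈ normalCone Q p) : 0 ≤ ⟪p, u⟫ :=
  have ⟨q, hq, h⟩ := exists_inner_nonneg_of_zero_mem_convexHull hQ u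
  h.trans (hu q hq)

lemma nontrivial_orthogonal_span_singleton [FiniteDimensional ℝ E]
    (hd : 2 ≤ Module.finrank ℝ E) (v : E) : Nontrivial (ℝ ∙ v)ᗮ := by
  have hsum := Submodule.finrank_add_finrank_orthogonal (ℝ ∙ v)
  have hspan : Module.finrank ℝ (ℝ ∙ v) ≤ 1 := by
    simpa using finrank_span_le_card (R := ℝ) {v}
  exact Module.nontrivial_of_finrank_pos (R := ℝ) (by lia)

variable [FiniteDimensional ℝ E] [MeasurableSpace E] [BorelSpace E] {s R : ℝ}

lemma volume_normalCone_inter_normalCone {p q : E} (hp : p ∈ Q) (hq : q ∈ Q) (hpq : p ≠ q) :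
    volume ((normalCone Q p : Set E) ∩ normalCone Q q) = 0 := by
  refine measure_mono_null ?_ (volume_setOf_inner_eq_zero (sub_ne_zero.2 hpq))
  rintro u ⟨hup, huq⟩
  rw [mem_ofPred_eq, inner_sub_left, sub_eq_zero]
  exact (huq p hp).antisymm (hup q hq)

lemma volume_closedBall_le_sum_normalCone (hQ : Q.Nonempty) (R : ℝ) :
    volume (closedBall (0 : E) R) ≤ ∑ p ∈ Q, volume (closedBall (0 : E) R ∩ normalCone Q p) := by
  refine (measure_mono ?_).trans (measure_biUnion_finset_le Q _)
  rw [← inter_iUnion₂, iUnion_normalCone_eq_univ hQ, inter_univ]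

lemma volume_biUnion_inter_normalCone {f : E → Set E} (hf : ∀ p ∈ Q, MeasurableSet (f p)) :
    volume (⋃ p ∈ Q, f p ∩ normalCone Q p) = ∑ p ∈ Q, volume (f p ∩ normalCone Q p) :=
  measure_biUnion_finset₀
    (fun _ hp _ hq hpq => measure_mono_null (inter_subset_inter inter_subset_right
      inter_subset_right) (volume_normalCone_inter_normalCone hp hq hpq))
    fun p hp => ((hf p hp).inter (isClosed_normalCone Q p).measurableSet).nullMeasurableSet

/- The pieces of the spindles with apices in `Q` cut out by the normal fan of `Q` occupy at least
as large a fraction of a spindle as the cones occupy of a ball, and the cones cover the ball. -/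
lemma volume_spindle_le_volume_biUnion_inter_normalCone (hd : 2 ≤ Module.finrank ℝ E)
    (hs : 0 ≤ s) (hR : 0 < R) (hQR : ∀ p ∈ Q, ‖p‖ = R)
    (hQ : (0 : E) ∈ convexHull ℝ (Q : Set E)) {v : E} (hv : ‖v‖ = 1) :
    volume (spindle s R v) ≤ volume (⋃ p ∈ Q, spindle s R (R⁻¹ • p) ∩ normalCone Q p) := by
  have hunit (p : E) (hp : p ∈ Q) : ‖R⁻¹ • p‖ = 1 := norm_inv_smul_eq_one hR (hQR p hp)
  have hpiece (p : E) (hp : p ∈ Q) :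
      volume (spindle s R v) * volume (closedBall (0 : E) R ∩ normalCone Q p) ≤
        volume (spindle s R (R⁻¹ • p) ∩ normalCone Q p) * volume (closedBall (0 : E) R) := by
    have := nontrivial_orthogonal_span_singleton hd (R⁻¹ • p)
    have hself : p ∈ normalCone Q p :=
      self_mem_normalCone fun q hq => (hQR q hq).le.trans (hQR p hp).ge
    rw [volume_spindle_eq_of_norm_eq s R (hv.trans (hunit p hp).symm)]
    refine volume_spindle_mul_volume_closedBall_inter_le (hunit p hp) hs hR
      (isClosed_normalCone Q p).measurableSet
      ((normalCone Q p).smul_mem (inv_pos.2 hR) hself) fun z hz => ?_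
    rw [real_inner_smul_left]
    exact mul_nonneg (inv_nonneg.2 hR.le) (inner_nonneg_of_mem_normalCone hQ hz)
  have hQne : Q.Nonempty := Finset.coe_nonempty.1 (convexHull_nonempty_iff.1 ⟨0, hQ⟩)
  refine (ENNReal.mul_le_mul_iff_left (measure_closedBall_pos volume (0 : E) hR).ne'
    measure_closedBall_lt_top.ne).1 ?_
  calc volume (spindle s R v) * volume (closedBall (0 : E) R)
      ≤ ∑ p ∈ Q, volume (spindle s R v) * volume (closedBall (0 : E) R ∩ normalCone Q p) := by
        rw [← Finset.mul_sum]
        exact mul_le_mul_right (volume_closedBall_le_sum_normalCone hQne R) _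
    _ ≤ ∑ p ∈ Q, volume (spindle s R (R⁻¹ • p) ∩ normalCone Q p) *
          volume (closedBall (0 : E) R) := Finset.sum_le_sum hpiece
    _ = volume (⋃ p ∈ Q, spindle s R (R⁻¹ • p) ∩ normalCone Q p) *
          volume (closedBall (0 : E) R) := by
        rw [← Finset.sum_mul, volume_biUnion_inter_normalCone fun p _ =>
          (isClosed_spindle s R _).measurableSet]

end NormalFans

section ConvexHulls

variable {E : Type*} [NormedAddCommGroup E] [NormedSpace ℝ E] [FiniteDimensional ℝ E]

lemma convexHull_eq_iUnion_image_stdSimplex (T : Set E) :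
    convexHull ℝ T = ⋃ m ∈ Finset.range (Module.finrank ℝ E + 2),
      (fun q : (Fin m → ℝ) × (Fin m → E) => ∑ i, q.1 i • q.2 i) ''
        stdSimplex ℝ (Fin m) ×ˢ univ.pi fun _ => T := by
  refine Subset.antisymm (fun x hx => ?_) (iUnion₂_subset fun m _ => image_subset_iff.2 ?_)
  · obtain ⟨ι, _, z, w, hz, hindep, hw, hw1, rfl⟩ := eq_pos_convex_span_of_mem_convexHull hx
    have e : Fin (Fintype.card ι) ≃ ι := (Fintype.equivFin ι).symm
    have hcard : Fintype.card ι < Module.finrank ℝ E + 2 :=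
      Nat.lt_succ_of_le <| hindep.card_le_finrank_succ.trans <|
        Nat.succ_le_succ <| Submodule.finrank_le _
    refine mem_biUnion (Finset.mem_coe.2 (Finset.mem_range.2 hcard))
      ⟨(w ∘ e, z ∘ e), ⟨⟨fun i => (hw (e i)).le, ?_⟩, fun i _ => hz ⟨e i, rfl⟩⟩, ?_⟩
    · exact (e.sum_comp w).trans hw1
    · exact e.sum_comp fun i => w i • z i
  · rintro ⟨w, z⟩ ⟨hw, hz⟩
    exact (convex_convexHull ℝ T).sum_mem (fun i _ => hw.1 i) hw.2
      fun i _ => subset_convexHull ℝ T (hz i (mem_univ i))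

lemma isCompact_convexHull {T : Set E} (hT : IsCompact T) : IsCompact (convexHull ℝ T) := by
  rw [convexHull_eq_iUnion_image_stdSimplex]
  exact Finset.isCompact_biUnion _ fun m _ =>
    ((isCompact_stdSimplex ℝ (Fin m)).prod (isCompact_univ_pi fun _ => hT)).image (by fun_prop)

end ConvexHulls

section Circumballs

lemma exists_le_dist_of_isLeast {X : Type*} [PseudoMetricSpace X] {K : Set X} {r₀ : ℝ}
    (hK : IsCompact K) (hr₀ : IsLeast {ρ : ℝ | ∃ c : X, K ⊆ closedBall c ρ} r₀) (c : X) :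
    ∃ p ∈ K, r₀ ≤ dist p c := by
  rcases K.eq_empty_or_nonempty with rfl | hne
  · have := hr₀.2 (show r₀ - 1 ∈ _ from ⟨c, empty_subset _⟩)
    linarith
  · obtain ⟨p, hp, hmax⟩ := hK.exists_isMaxOn hne (f := (dist · c)) (by fun_prop)
    exact ⟨p, hp, hr₀.2 ⟨c, fun q hq => hmax hq⟩⟩

variable {E : Type*} [NormedAddCommGroup E] [InnerProductSpace ℝ E] {K : Set E} {c : E} {r₀ : ℝ}

/- Moving the center by `-t u` and letting `t → 0`, the farthest points of `K` accumulate at a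
contact point in the half-space of `u`. -/
lemma exists_norm_sub_eq_and_inner_nonneg_of_isLeast (hK : IsCompact K)
    (hr₀ : IsLeast {ρ : ℝ | ∃ c : E, K ⊆ closedBall c ρ} r₀) (hc : K ⊆ closedBall c r₀) (u : E) :
    ∃ p ∈ K, ‖p - c‖ = r₀ ∧ 0 ≤ ⟪p - c, u⟫ := by
  let t (n : ℕ) : ℝ := 1 / (n + 1)
  have ht (n : ℕ) : 0 < t n := Nat.one_div_pos_of_nat
  choose p hpK hp using fun n => exists_le_dist_of_isLeast hK hr₀ (c - t n • u)
  simp only [dist_eq_norm, ← sub_add] at hp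
  obtain ⟨q, hqK, φ, hφ, hlim⟩ := hK.tendsto_subseq hpK
  have htlim : Filter.Tendsto (t ∘ φ) Filter.atTop (nhds 0) :=
    tendsto_one_div_add_atTop_nhds_zero_nat.comp hφ.tendsto_atTop
  have hle {x : E} (hx : x ∈ K) : ‖x - c‖ ≤ r₀ := mem_closedBall_iff_norm.1 (hc hx)
  have hr₀0 : 0 ≤ r₀ := (norm_nonneg _).trans (hle hqK)
  have hinner (n : ℕ) : 0 ≤ 2 * ⟪p n - c, u⟫ + t n * ‖u‖ ^ 2 := by
    have hsq := (pow_le_pow_left₀ (norm_nonneg _) (hle (hpK n)) 2).trans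
      (pow_le_pow_left₀ hr₀0 (hp n) 2)
    rw [norm_add_sq_real, inner_smul_right, norm_smul,
      mul_pow, Real.norm_eq_abs, sq_abs] at hsq
    refine (mul_nonneg_iff_of_pos_left (ht n)).1 ?_
    linarith
  refine ⟨q, hqK, (hle hqK).antisymm ?_, ?_⟩
  · have hnormlim : Filter.Tendsto (fun n => ‖p (φ n) - c + t (φ n) • u‖) Filter.atTop
        (nhds ‖q - c + (0 : ℝ) • u‖) := ((hlim.sub_const c).add (htlim.smul_const u)).norm
    simpa using ge_of_tendsto' hnormlim fun n => hp (φ n)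
  · have hinnerlim : Filter.Tendsto (fun n => 2 * ⟪p (φ n) - c, u⟫ + t (φ n) * ‖u‖ ^ 2)
        Filter.atTop (nhds (2 * ⟪q - c, u⟫ + 0 * ‖u‖ ^ 2)) :=
      (((hlim.sub_const c).inner tendsto_const_nhds).const_mul 2).add (htlim.mul_const _)
    simpa using ge_of_tendsto' hinnerlim fun n => hinner (φ n)

variable [FiniteDimensional ℝ E]

lemma zero_mem_convexHull_of_forall_exists_inner_nonneg {T : Set E} (hT : IsCompact T)
    (h : ∀ u : E, ∃ p ∈ T, 0 ≤ ⟪p, u⟫) : (0 : E) ∈ convexHull ℝ T := by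
  by_contra hT0
  obtain ⟨f, c, hf0, hf⟩ := geometric_hahn_banach_point_closed (convex_convexHull ℝ T)
    (isCompact_convexHull hT).isClosed hT0
  obtain ⟨p, hp, hpos⟩ := h (-(InnerProductSpace.toDual ℝ E).symm f)
  have hfp := hf p (subset_convexHull ℝ T hp)
  rw [inner_neg_right, real_inner_comm, InnerProductSpace.toDual_symm_apply] at hpos
  rw [map_zero] at hf0
  linarith

lemma exists_finset_zero_mem_convexHull_of_isLeast (hK : IsCompact K)
    (hr₀ : IsLeast {ρ : ℝ | ∃ c : E, K ⊆ closedBall c ρ} r₀) (hc : K ⊆ closedBall c r₀) :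
    ∃ Q : Finset E, (∀ q ∈ Q, ‖q‖ = r₀ ∧ c + q ∈ K) ∧ (0 : E) ∈ convexHull ℝ (Q : Set E) := by
  have hT : IsCompact (sphere (0 : E) r₀ ∩ (c + ·) ⁻¹' K) :=
    (isCompact_sphere 0 r₀).inter_right (hK.isClosed.preimage (by fun_prop))
  have h0 := zero_mem_convexHull_of_forall_exists_inner_nonneg hT fun u => by
    obtain ⟨p, hp, hpr, hpu⟩ := exists_norm_sub_eq_and_inner_nonneg_of_isLeast hK hr₀ hc u
    exact ⟨p - c, ⟨mem_sphere_zero_iff_norm.2 hpr, by simpa using hp⟩, hpu⟩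
  rw [convexHull_eq_union_convexHull_finite_subsets] at h0
  obtain ⟨Q, hQ, h0⟩ := mem_iUnion₂.1 h0
  exact ⟨Q, fun q hq => ⟨mem_sphere_zero_iff_norm.1 (hQ hq).1, (hQ hq).2⟩, h0⟩

end Circumballs

section BallHulls

local notation "𝔼" => EuclideanSpace ℝ (Fin d)

variable {r s R : ℝ}

lemma mem_ballHull_iff {X : Set 𝔼} {z : 𝔼} :
    z ∈ ballHull r X ↔ ∀ y, X ⊆ closedBall y r → z ∈ closedBall y r := by
  simp only [ballHull, mem_iInter, mem_ofPred_eq]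

lemma ballHull_closure (r : ℝ) (X : Set 𝔼) : ballHull r (closure X) = ballHull r X := by
  simp only [ballHull, isClosed_closedBall.closure_subset_iff]

lemma convex_ballHull (r : ℝ) (X : Set 𝔼) : Convex ℝ (ballHull r X) :=
  convex_iInter₂ fun y _ => convex_closedBall y r

lemma isCompact_ballHull {X : Set 𝔼} {c : 𝔼} (hX : X ⊆ closedBall c r) :
    IsCompact (ballHull r X) :=
  (isCompact_closedBall c r).of_isClosed_subset
    (isClosed_biInter fun _ _ => isClosed_closedBall) fun _ hz => mem_ballHull_iff.1 hz c hX

lemma ballHull_pair_subset_spindle {v : 𝔼} [Nontrivial (ℝ ∙ v)ᗮ] (hv : ‖v‖ = 1) (hr : 0 ≤ r)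
    (hsr : s ^ 2 + R ^ 2 = r ^ 2) : ballHull r {R • v, -(R • v)} ⊆ spindle s R v := by
  refine fun z hz => mem_spindle_of_forall_norm_sub_le hv hsr fun e he => ?_
  have hapex {t : ℝ} (ht : t ^ 2 = R ^ 2) : t • v ∈ closedBall (s • (e : 𝔼)) r := by
    rw [mem_closedBall_iff_norm, sub_eq_add_neg, ← Submodule.coe_smul, ← Submodule.coe_neg]
    refine abs_le_of_sq_le_sq' ?_ hr |>.2
    rw [norm_sq_smul_add_orthogonal hv, norm_neg, norm_smul, he, mul_one, Real.norm_eq_abs,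
      sq_abs, ht, ← hsr, add_comm]
  rw [← mem_closedBall_iff_norm]
  refine mem_ballHull_iff.1 hz _ (insert_subset (hapex rfl) (singleton_subset_iff.2 ?_))
  rw [← neg_smul]
  exact hapex (neg_sq R)

lemma add_mem_ballHull_of_mem_spindle_inter_normalCone (hR : 0 < R) (hs : 0 ≤ s) (hr : 0 ≤ r)
    (hsr : s ^ 2 + R ^ 2 = r ^ 2) {Q : Finset 𝔼} (hQR : ∀ q ∈ Q, ‖q‖ = R)
    (hQ : (0 : 𝔼) ∈ convexHull ℝ (Q : Set 𝔼)) {X : Set 𝔼} {c : 𝔼} (hQX : ∀ q ∈ Q, c + q ∈ X)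
    {p : 𝔼} (hp : p ∈ Q) {z : 𝔼} (hz : z ∈ spindle s R (R⁻¹ • p) ∩ normalCone Q p) :
    c + z ∈ ballHull r X := by
  refine mem_ballHull_iff.2 fun y hy => ?_
  have hQy (q : 𝔼) (hq : q ∈ Q) : ‖q - (y - c)‖ ≤ r := by
    simpa [dist_eq_norm, sub_sub_eq_add_sub, add_comm] using hy (hQX q hq)
  have hys : ‖y - c‖ ≤ s := by
    obtain ⟨q, hq, hqy⟩ := exists_inner_nonneg_of_zero_mem_convexHull hQ (-(y - c))
    have hsq := pow_le_pow_left₀ (norm_nonneg _) (hQy q hq) 2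
    rw [norm_sub_sq_real, hQR q hq] at hsq
    rw [inner_neg_right] at hqy
    exact abs_le_of_sq_le_sq' (by linarith) hs |>.2
  have hzy := norm_sub_le_of_mem_spindle (norm_inv_smul_eq_one hR (hQR p hp)) hR.le hr hsr hz.1
    (by
      rw [real_inner_smul_left]
      exact mul_nonneg (inv_nonneg.2 hR.le) (inner_nonneg_of_mem_normalCone hQ hz.2))
    hys (by rw [smul_inv_smul₀ hR.ne']; exact hQy p hp)
  simpa [dist_eq_norm, sub_sub_eq_add_sub, add_comm] using hzy

lemma volume_spindle_le_volume_ballHull (hd : 2 ≤ d) (hR : 0 < R) (hs : 0 ≤ s) (hr : 0 ≤ r)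
    (hsr : s ^ 2 + R ^ 2 = r ^ 2) {X : Set 𝔼}
    (hX : IsLeast {ρ : ℝ | ∃ c : 𝔼, X ⊆ closedBall c ρ} R) {v : 𝔼} (hv : ‖v‖ = 1) :
    volume (spindle s R v) ≤ volume (ballHull r X) := by
  simp only [← isClosed_closedBall.closure_subset_iff (s := X)] at hX
  rw [← ballHull_closure]
  obtain ⟨c, hc⟩ := hX.1
  have hcompact : IsCompact (closure X) :=
    (isCompact_closedBall c R).of_isClosed_subset isClosed_closure hc
  obtain ⟨Q, hQ, hQ0⟩ := exists_finset_zero_mem_convexHull_of_isLeast hcompact hX hc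
  have hQR (q : 𝔼) (hq : q ∈ Q) : ‖q‖ = R := (hQ q hq).1
  calc volume (spindle s R v)
      ≤ volume (⋃ p ∈ Q, spindle s R (R⁻¹ • p) ∩ normalCone Q p) :=
        volume_spindle_le_volume_biUnion_inter_normalCone (by simpa using hd) hs hR hQR hQ0 hv
    _ ≤ volume ((c + ·) ⁻¹' ballHull r (closure X)) :=
        measure_mono <| iUnion₂_subset fun p hp z hz =>
          add_mem_ballHull_of_mem_spindle_inter_normalCone hR hs hr hsr hQR hQ0
            (fun q hq => (hQ q hq).2) hp hz
    _ = volume (ballHull r (closure X)) := measure_preimage_add _ _ _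

lemma exists_sq_add_sq_eq (hR : 0 ≤ R) (hRr : R ≤ r) : ∃ s, 0 ≤ s ∧ s ^ 2 + R ^ 2 = r ^ 2 :=
  ⟨√(r ^ 2 - R ^ 2), Real.sqrt_nonneg _, by
    rw [Real.sq_sqrt (sub_nonneg.2 (pow_le_pow_left₀ hR hRr 2)), sub_add_cancel]⟩

lemma volume_ballHull_pair_le_volume_ballHull (hd : 2 ≤ d) (hR : 0 < R) (hRr : R ≤ r)
    {X : Set 𝔼} (hX : IsLeast {ρ : ℝ | ∃ c : 𝔼, X ⊆ closedBall c ρ} R) {x : 𝔼} (hx : ‖x‖ = R) :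
    volume (ballHull r {x, -x}) ≤ volume (ballHull r X) := by
  obtain ⟨s, hs, hsr⟩ := exists_sq_add_sq_eq hR.le hRr
  have hr : 0 ≤ r := hR.le.trans hRr
  obtain ⟨v, hv, rfl⟩ : ∃ v : 𝔼, ‖v‖ = 1 ∧ R • v = x :=
    ⟨R⁻¹ • x, norm_inv_smul_eq_one hR hx, smul_inv_smul₀ hR.ne' x⟩
  have := nontrivial_orthogonal_span_singleton (E := 𝔼) (by simpa using hd) v
  exact (measure_mono (ballHull_pair_subset_spindle hv hr hsr)).trans
    (volume_spindle_le_volume_ballHull hd hR hs hr hsr hX hv)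

lemma volume_ballHull_pos (hd : 2 ≤ d) (hR : 0 < R) (hRr : R ≤ r) {X : Set 𝔼}
    (hX : IsLeast {ρ : ℝ | ∃ c : 𝔼, X ⊆ closedBall c ρ} R) : 0 < volume (ballHull r X) := by
  obtain ⟨s, hs, hsr⟩ := exists_sq_add_sq_eq hR.le hRr
  have : Nonempty (Fin d) := ⟨0, by lia⟩
  obtain ⟨v, hv⟩ := exists_norm_eq 𝔼 zero_le_one
  exact (volume_spindle_pos hR s v).trans_le
    (volume_spindle_le_volume_ballHull hd hR hs (hR.le.trans hRr) hsr hX hv)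

end BallHulls

theorem intrinsicVolume_ballHull_ge_general (hd : 2 ≤ d) {r r₀ : ℝ} (hr : r₀ ≤ r) (hr₀ : 0 < r₀)
    {k : ℕ} (hk : k ≤ d) {P : Set (EuclideanSpace ℝ (Fin d))}
    (hP : IsLeast {ρ : ℝ | ∃ c : EuclideanSpace ℝ (Fin d), P ⊆ closedBall c ρ} r₀)
    {V : ℕ → Set (EuclideanSpace ℝ (Fin d)) → ℝ} (hV : IsIntrinsicVolumes d V)
    {x : EuclideanSpace ℝ (Fin d)} (hx : ‖x‖ = r₀) :
    (d.choose k : ℝ) * unitBallVol d ^ ((1 : ℝ) - k / d) / unitBallVol (d - k) *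
        (volume (ballHull r {x, -x})).toReal ^ ((k : ℝ) / d) ≤ V k (ballHull r P) := by
  obtain ⟨c, hc⟩ := hP.1
  have hpos := volume_ballHull_pos hd hr₀ hr hP
  let K : ConvexBody (EuclideanSpace ℝ (Fin d)) :=
    ⟨ballHull r P, convex_ballHull r P,
      isCompact_ballHull (hc.trans (closedBall_subset_closedBall hr)),
      nonempty_of_measure_ne_zero hpos.ne'⟩
  have hfin : volume (K : Set (EuclideanSpace ℝ (Fin d))) ≠ ⊤ := K.isCompact.measure_lt_top.ne
  have hvol : (volume (ballHull r {x, -x})).toReal ≤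
      volume.real (K : Set (EuclideanSpace ℝ (Fin d))) :=
    ENNReal.toReal_mono hfin (volume_ballHull_pair_le_volume_ballHull hd hr₀ hr hP hx)
  have hd_pos := unitBallVol_pos d
  have hdk_pos := unitBallVol_pos (d - k)
  calc _ ≤ (d.choose k : ℝ) * unitBallVol d ^ ((1 : ℝ) - k / d) / unitBallVol (d - k) *
          volume.real (K : Set (EuclideanSpace ℝ (Fin d))) ^ ((k : ℝ) / d) := by gcongr
    _ ≤ V k K := hV.isoperimetric_inequality (by lia) K (ENNReal.toReal_pos hpos.ne' hfin) hk

/-- Lower bound for intrinsic volumes of r-ball convex hulls in terms of the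
volume of the r-spindle of the same circumradius. -/
theorem intrinsicVolume_ballHull_ge (r r₀ : ℝ) (hr : r₀ < r) (hr₀ : 0 < r₀)
    (k : ℕ) (hk : 0 < k) (hkd : k < d)
    (P : Set (EuclideanSpace ℝ (Fin d))) (hPfin : P.Finite) (hcard : 1 < P.ncard)
    (hcr : IsLeast {ρ : ℝ | ∃ cc : EuclideanSpace ℝ (Fin d), P ⊆ closedBall cc ρ} r₀)
    (V : ℕ → Set (EuclideanSpace ℝ (Fin d)) → ℝ) (hV : IsIntrinsicVolumes d V)
    (x : EuclideanSpace ℝ (Fin d)) (hx : ‖x‖ = r₀) :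
    (d.choose k : ℝ) * unitBallVol d ^ ((1 : ℝ) - k / d) / unitBallVol (d - k) *
        (volume (ballHull r {x, -x})).toReal ^ ((k : ℝ) / d)
      ≤ V k (ballHull r P) :=
  intrinsicVolume_ballHull_ge_general (by lia) hr.le hr₀ hkd.le hcr hV hx
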